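/- There exists ε₀ > 0 such that for all 0 < ε ≤ ε₀ the following hold. (i) If λ ∈ ℝ, ν is a nonnegative integer, and u(r,θ) = u^r(r)cos(νθ) is a nonzero C² solution of D_ε u = λu on the closed unit disc, then λ = (∫_0^{1−r₀} p(1−r)|(u^r)'(r)|² dr − ν²∫_0^{1−r₀} q(1−r)|u^r(r)|² dr)/(∫_0^{1−r₀} w(1−r)|u^r(r)|² dr); in particular λ ≥ 0. (ii) Every C² solution of D_ε u = 0 on the closed unit disc is constant, and constants are solutions. (iii) If u₁, u₂ are C² eigenfunctions of D_ε on the closed disc with distinct eigenvalues, then ∫∫_{{r < 1−r₀}} w(1−r)·u₁(r,θ)·u₂(r,θ) dr dθ = 0. -/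

import Mathlib

open Real Set Filter Topology MeasureTheory

noncomputable def s0 (ε t : ℝ) : ℝ :=
  if 0 ≤ t ∧ t ≤ ε then π/2 + (t/ε) * Real.sqrt (1 - (t/ε)^2) + Real.arcsin (t/ε) else π

noncomputable def s12 (ε t : ℝ) : ℝ :=
  if 0 ≤ t ∧ t ≤ ε then -(2/3) * (1 - (t/ε)^2) ^ ((3:ℝ)/2) else 0

noncomputable def s2 (ε t : ℝ) : ℝ :=
  if 0 ≤ t ∧ t ≤ ε then
    π/8 + (1/12) * ((t/ε) * Real.sqrt (1 - (t/ε)^2) * (5 - 2*(t/ε)^2) + 3 * Real.arcsin (t/ε))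
  else π/4

noncomputable def s22 (ε t : ℝ) : ℝ :=
  if 0 ≤ t ∧ t ≤ ε then
    π/8 + (1/4) * ((t/ε) * Real.sqrt (1 - (t/ε)^2) * (2*(t/ε)^2 - 1) + Real.arcsin (t/ε))
  else π/4

noncomputable def s3 (ε t : ℝ) : ℝ :=
  if 0 ≤ t ∧ t ≤ ε then -(2/15) * (1 - (t/ε)^2) ^ ((5:ℝ)/2) else 0

noncomputable def s32 (ε t : ℝ) : ℝ :=
  if 0 ≤ t ∧ t ≤ ε then -(2/15) * (2 + 3*(t/ε)^2) * (1 - (t/ε)^2) ^ ((3:ℝ)/2) else 0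

noncomputable def phi11 (ε t : ℝ) : ℝ :=
  (1/2) * (s22 ε t * s2 ε t - s3 ε t * s12 ε t) / ((s12 ε t)^2 - s22 ε t * s0 ε t)

noncomputable def phi22 (ε t : ℝ) : ℝ :=
  (1/2) * ((s22 ε t)^2 - s32 ε t * s12 ε t) / ((s12 ε t)^2 - s22 ε t * s0 ε t)

noncomputable def phi2d (ε t : ℝ) : ℝ :=
  s12 ε t / ((s12 ε t)^2 - s22 ε t * s0 ε t)

/-- The principal Sturm–Liouville coefficient on the disc, as a function of the
radius `r`; this is `p(1−r)` in the paper's notation. -/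
noncomputable def pd (ε r0 r : ℝ) : ℝ :=
  (1/8) * (1 - ε) * Real.sign (1 - r0 - r) *
    Real.exp (∫ s in (1-ε)..r, (phi11 ε (1-s) + s * phi2d ε (1-s)) / (s * phi22 ε (1-s)))

/-- `q(1−r)` as a function of `r`. -/
noncomputable def qd (ε r0 r : ℝ) : ℝ :=
  -(pd ε r0 r / r^2) * (phi11 ε (1-r) / phi22 ε (1-r))

/-- The weight `w(1−r)` as a function of `r`. -/
noncomputable def wd (ε r0 r : ℝ) : ℝ := -pd ε r0 r / phi22 ε (1-r)

/-- The point of the plane (seen as `ℂ`) with polar coordinates `(r, θ)`. -/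
noncomputable def pol (r θ : ℝ) : ℂ := (r : ℂ) * Complex.exp ((θ : ℂ) * Complex.I)

/-- Radial partial derivative of `F` at `(r, θ)`. -/
noncomputable def Fr (F : ℂ → ℝ) (r θ : ℝ) : ℝ := deriv (fun t : ℝ => F (pol t θ)) r

/-- Second radial partial derivative of `F` at `(r, θ)`. -/
noncomputable def Frr (F : ℂ → ℝ) (r θ : ℝ) : ℝ :=
  deriv (deriv (fun t : ℝ => F (pol t θ))) r

/-- Second angular partial derivative of `F` at `(r, θ)`. -/
noncomputable def Ftt (F : ℂ → ℝ) (r θ : ℝ) : ℝ :=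
  deriv (deriv (fun s : ℝ => F (pol r s))) θ

/-- `F` is a `C²` function on the closed unit disc satisfying `D_ε F = λ F`
everywhere (expressed in polar coordinates). -/
def IsDiscSol (ε lam : ℝ) (F : ℂ → ℝ) : Prop :=
  ContDiffOn ℝ 2 F (Metric.closedBall 0 1) ∧
  ∀ r ∈ Ioc (0:ℝ) 1, ∀ θ : ℝ,
    phi11 ε (1-r) * ((1/r) * Fr F r θ + (1/r^2) * Ftt F r θ) +
      phi22 ε (1-r) * Frr F r θ + phi2d ε (1-r) * Fr F r θ = lam * F (pol r θ)

/-!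
Multiplying the radial part of `D_ε` by an integrating factor puts it in Sturm–Liouville form on
`0 < r < R := 1 - r₀`. The leading coefficient `φ₂₂` changes sign at `R`, the operator being
elliptic inside and hyperbolic outside, and the integrating factor `p` tends to `0` both at the
centre and at `R`, where its logarithmic derivative has poles with residues of the right sign.
Integration by parts over `(0, R)` therefore has no boundary terms. It gives the Rayleigh
quotient, which is nonnegative because `p > 0`, `w > 0` and `q < 0`, and, applied to the angular
integral of the Wronskian `u₁ ∂_r u₂ - u₂ ∂_r u₁`, the orthogonality relation.

For the kernel, every angular Fourier mode of a solution has vanishing energy, hence is constant on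
`(0, R)`. It stays constant past `R`: there the radial equation is a singular initial value problem,
for which `v'² + v² / (r - R)` obeys a Grönwall inequality. Modes of nonzero frequency vanish at
the centre, so the solution equals its angular mean, that is, its value at the centre.
-/

theorem integral_nonneg_of_nonneg_on_Ioo {a b : ℝ} {f : ℝ → ℝ} (hab : a ≤ b)
    (hf : ∀ x ∈ Ioo a b, 0 ≤ f x) : 0 ≤ ∫ x in a..b, f x := by
  rw [intervalIntegral.integral_of_le hab, integral_Ioc_eq_integral_Ioo]
  exact setIntegral_nonneg measurableSet_Ioo hf

theorem integral_pos_of_continuousOn_Ioo {a b c : ℝ} {f : ℝ → ℝ}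
    (hf : IntervalIntegrable f volume a b) (hcont : ContinuousOn f (Ioo a b))
    (hnonneg : ∀ x ∈ Ioo a b, 0 ≤ f x) (hc : c ∈ Ioo a b) (hpos : 0 < f c) :
    0 < ∫ x in a..b, f x := by
  have hab : a ≤ b := (hc.1.trans hc.2).le
  rw [intervalIntegral.integral_of_le hab, integral_Ioc_eq_integral_Ioo,
    setIntegral_pos_iff_support_of_nonneg_ae (ae_restrict_of_forall_mem measurableSet_Ioo hnonneg)
      (hf.1.mono_set Ioo_subset_Ioc_self)]
  have hopen : IsOpen (Ioo a b ∩ f ⁻¹' Ioi 0) := hcont.isOpen_inter_preimage isOpen_Ioo isOpen_Ioi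
  refine (hopen.measure_pos volume ⟨c, hc, hpos⟩).trans_le (measure_mono fun x hx ↦ ?_)
  exact ⟨(mem_Ioi.1 hx.2).ne', hx.1⟩

theorem tendsto_zero_nhdsGT_of_div_le_logDeriv {f g : ℝ → ℝ} {a α : ℝ} (hα : 0 < α)
    (hpos : ∀ᶠ x in 𝓝[>] a, 0 < f x) (hderiv : ∀ᶠ x in 𝓝[>] a, HasDerivAt f (f x * g x) x)
    (hg : ∀ᶠ x in 𝓝[>] a, α / (x - a) ≤ g x) : Tendsto f (𝓝[>] a) (𝓝 0) := by
  obtain ⟨b, hab : a < b, hb⟩ :=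
    mem_nhdsGT_iff_exists_Ioo_subset.1 (hpos.and (hderiv.and hg) : _ ∈ 𝓝[>] a)
  let h : ℝ → ℝ := fun x ↦ f x * (x - a) ^ (-α)
  have hh (x) (hx : x ∈ Ioo a b) :
      HasDerivAt h (f x * (x - a) ^ (-α) * (g x - α / (x - a))) x := by
    have hxa : 0 < x - a := sub_pos.2 hx.1
    have := (hb hx).2.1.mul (((hasDerivAt_id x).sub_const a).rpow_const (p := -α) (.inl hxa.ne'))
    refine this.congr_deriv ?_
    simp only [id, rpow_sub_one hxa.ne']
    ring
  have hmono : MonotoneOn h (Ioo a b) := by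
    refine monotoneOn_of_deriv_nonneg (convex_Ioo a b)
      (fun x hx ↦ (hh x hx).continuousAt.continuousWithinAt) ?_ ?_ <;>
      rw [interior_Ioo] <;> intro x hx
    · exact (hh x hx).differentiableAt.differentiableWithinAt
    · rw [(hh x hx).deriv]
      obtain ⟨hfx, -, hgx⟩ := hb hx
      have := sub_pos.2 hx.1
      have := sub_nonneg.2 hgx
      positivity
  obtain ⟨c, hc⟩ := exists_between hab
  have hlim : Tendsto (fun x ↦ h c * (x - a) ^ α) (𝓝[>] a) (𝓝 0) := by
    have : Tendsto (fun x ↦ h c * (x - a) ^ α) (𝓝 a) (𝓝 (h c * (a - a) ^ α)) :=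
      ((continuous_id.sub continuous_const).rpow_const fun _ ↦ .inr hα.le).continuousAt.const_mul _
    simpa [zero_rpow hα.ne'] using this.mono_left nhdsWithin_le_nhds
  refine squeeze_zero' (t₀ := 𝓝[>] a) (hpos.mono fun _ ↦ le_of_lt) ?_ hlim
  filter_upwards [Ioo_mem_nhdsGT hc.1] with x hx
  have hxa : 0 < x - a := sub_pos.2 hx.1
  have hle := hmono ⟨hx.1, hx.2.trans hc.2⟩ hc hx.2.le
  calc f x = h x * (x - a) ^ α := by
        simp only [h]; rw [mul_assoc, ← rpow_add hxa, neg_add_cancel, rpow_zero, mul_one]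
    _ ≤ h c * (x - a) ^ α := by gcongr

theorem tendsto_zero_nhdsLT_of_logDeriv_le_neg_div {f g : ℝ → ℝ} {b α : ℝ} (hα : 0 < α)
    (hpos : ∀ᶠ x in 𝓝[<] b, 0 < f x) (hderiv : ∀ᶠ x in 𝓝[<] b, HasDerivAt f (f x * g x) x)
    (hg : ∀ᶠ x in 𝓝[<] b, g x ≤ -(α / (b - x))) : Tendsto f (𝓝[<] b) (𝓝 0) := by
  have hneg : Tendsto Neg.neg (𝓝[>] (-b)) (𝓝[<] b) := tendsto_neg_nhdsGT_neg
  have hrefl : Tendsto (fun x ↦ f (-x)) (𝓝[>] (-b)) (𝓝 0) := by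
    refine tendsto_zero_nhdsGT_of_div_le_logDeriv (g := fun x ↦ -g (-x)) hα (hneg.eventually hpos)
      ((hneg.eventually hderiv).mono fun x hx ↦ ?_) ((hneg.eventually hg).mono fun x hx ↦ ?_)
    · exact (hx.scomp x (hasDerivAt_neg x)).congr_deriv (by simp)
    · rw [sub_neg_eq_add] at hx ⊢
      rw [add_comm x]
      linarith
  simpa [Function.comp_def] using hrefl.comp (tendsto_neg_nhdsLT (a := b))

theorem intervalIntegrable_of_le_deriv {a b la lb : ℝ} {f f' w : ℝ → ℝ} (hab : a < b)
    (hf : ∀ x ∈ Ioo a b, HasDerivAt f (f' x) x)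
    (ha : Tendsto f (𝓝[>] a) (𝓝 la)) (hb : Tendsto f (𝓝[<] b) (𝓝 lb))
    (hw : ContinuousOn w (Ioo a b)) (hw0 : ∀ x ∈ Ioo a b, 0 ≤ w x)
    (hwf : ∀ x ∈ Ioo a b, w x ≤ f' x) : IntervalIntegrable w volume a b := by
  have hcont : ContinuousOn f (Ioo a b) := fun x hx ↦ (hf x hx).continuousAt.continuousWithinAt
  have heq : EqOn (extendFrom (Ioo a b) f) f (Ioo a b) := fun x hx ↦
    extendFrom_eq (subset_closure hx) (hcont x hx)
  have hf'_int : IntegrableOn f' (Ioc a b) :=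
    intervalIntegral.integrableOn_deriv_of_nonneg
      (continuousOn_Icc_extendFrom_Ioo hcont ha hb)
      (fun x hx ↦ (hf x hx).congr_of_eventuallyEq
        (heq.eventuallyEq_of_mem (Ioo_mem_nhds hx.1 hx.2)))
      fun x hx ↦ (hw0 x hx).trans (hwf x hx)
  rw [intervalIntegrable_iff_integrableOn_Ioo_of_le hab.le]
  refine (hf'_int.mono_set Ioo_subset_Ioc_self).mono' (hw.aestronglyMeasurable measurableSet_Ioo) ?_
  refine ae_restrict_of_forall_mem measurableSet_Ioo fun x hx ↦ ?_
  rw [norm_of_nonneg (hw0 x hx)]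
  exact hwf x hx

theorem nonpos_of_deriv_le_mul {E E' : ℝ → ℝ} {a b L : ℝ} (hcont : ContinuousOn E (Ico a b))
    (hE : ∀ x ∈ Ioo a b, HasDerivAt E (E' x) x) (hle : ∀ x ∈ Ioo a b, E' x ≤ L * E x)
    (ha : E a ≤ 0) : ∀ x ∈ Ico a b, E x ≤ 0 := by
  intro x hx
  have hG (y) (hy : y ∈ Ioo a b) : HasDerivAt (fun y ↦ E y * exp (-L * y))
      ((E' y - L * E y) * exp (-L * y)) y :=
    ((hE y hy).mul ((hasDerivAt_id y).const_mul (-L)).exp).congr_deriv (by simp only [id]; ring)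
  have hanti : AntitoneOn (fun y ↦ E y * exp (-L * y)) (Ico a b) := by
    refine antitoneOn_of_deriv_nonpos (convex_Ico a b) (hcont.mul (by fun_prop)) ?_ ?_ <;>
      rw [interior_Ico] <;> intro y hy
    · exact (hG y hy).differentiableAt.differentiableWithinAt
    · rw [(hG y hy).deriv]
      exact mul_nonpos_of_nonpos_of_nonneg (sub_nonpos.2 (hle y hy)) (exp_pos _).le
  have hxa : E x * exp (-L * x) ≤ E a * exp (-L * a) :=
    hanti ⟨le_rfl, hx.1.trans_lt hx.2⟩ hx hx.1
  exact nonpos_of_mul_nonpos_left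
    (hxa.trans (mul_nonpos_of_nonpos_of_nonneg ha (exp_pos _).le)) (exp_pos _)

theorem continuous_of_continuousOn_prod_univ {f : ℝ × ℝ → ℝ} {I : Set ℝ} {x : ℝ}
    (hf : ContinuousOn f (I ×ˢ univ)) (hx : x ∈ I) : Continuous fun t ↦ f (x, t) :=
  continuousOn_univ.1 (hf.comp (f := fun t ↦ (x, t)) (by fun_prop) fun t _ ↦ ⟨hx, mem_univ t⟩)

theorem hasDerivAt_intervalIntegral_of_continuousOn {f f' : ℝ → ℝ → ℝ} {I : Set ℝ} {a b x : ℝ}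
    (hI : IsOpen I) (hx : x ∈ I) (hf : ContinuousOn f.uncurry (I ×ˢ univ))
    (hf' : ContinuousOn f'.uncurry (I ×ˢ univ))
    (hderiv : ∀ y ∈ I, ∀ t, HasDerivAt (fun y ↦ f y t) (f' y t) y) :
    HasDerivAt (fun y ↦ ∫ t in a..b, f y t) (∫ t in a..b, f' x t) x := by
  obtain ⟨δ, hδ, hball⟩ := Metric.isOpen_iff.1 hI x hx
  have hsub : Metric.closedBall x (δ / 2) ⊆ I :=
    (Metric.closedBall_subset_ball (half_lt_self hδ)).trans hball
  obtain ⟨C, hC⟩ :=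
    ((isCompact_closedBall x (δ / 2)).prod isCompact_uIcc).exists_bound_of_continuousOn
      (hf'.mono (prod_mono hsub (subset_univ (uIcc a b))))
  refine (intervalIntegral.hasDerivAt_integral_of_dominated_loc_of_deriv_le (bound := fun _ ↦ C)
    (Metric.ball_mem_nhds x (half_pos hδ)) ?_
    ((continuous_of_continuousOn_prod_univ hf hx).intervalIntegrable _ _)
    (continuous_of_continuousOn_prod_univ hf' hx).aestronglyMeasurable
    (ae_of_all _ fun t ht y hy ↦ ?_) intervalIntegrable_const (ae_of_all _ fun t _ y hy ↦ ?_)).2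
  · filter_upwards [hI.mem_nhds hx] with y hy using
      (continuous_of_continuousOn_prod_univ hf hy).aestronglyMeasurable
  · exact hC (y, t) ⟨Metric.ball_subset_closedBall hy, uIoc_subset_uIcc ht⟩
  · exact hderiv y (hsub (Metric.ball_subset_closedBall hy)) t

theorem integral_mul_deriv2_comm_of_periodic {f f' f'' g g' g'' : ℝ → ℝ} {T : ℝ}
    (hf : ∀ θ, HasDerivAt f (f' θ) θ) (hf' : ∀ θ, HasDerivAt f' (f'' θ) θ)
    (hg : ∀ θ, HasDerivAt g (g' θ) θ) (hg' : ∀ θ, HasDerivAt g' (g'' θ) θ)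
    (hf'' : Continuous f'') (hg'' : Continuous g'')
    (hfT : Function.Periodic f T) (hf'T : Function.Periodic f' T)
    (hgT : Function.Periodic g T) (hg'T : Function.Periodic g' T) :
    ∫ θ in 0..T, f'' θ * g θ = ∫ θ in 0..T, f θ * g'' θ := by
  have hcont {h h' : ℝ → ℝ} (hh : ∀ θ, HasDerivAt h (h' θ) θ) : Continuous h :=
    continuous_iff_continuousAt.2 fun θ ↦ (hh θ).continuousAt
  have hwronskian (θ : ℝ) :
      HasDerivAt (fun θ ↦ f' θ * g θ - f θ * g' θ) (f'' θ * g θ - f θ * g'' θ) θ :=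
    (((hf' θ).mul (hg θ)).sub ((hf θ).mul (hg' θ))).congr_deriv (by ring)
  have hint₁ : IntervalIntegrable (fun θ ↦ f'' θ * g θ) volume 0 T :=
    (hf''.mul (hcont hg)).intervalIntegrable _ _
  have hint₂ : IntervalIntegrable (fun θ ↦ f θ * g'' θ) volume 0 T :=
    ((hcont hf).mul hg'').intervalIntegrable _ _
  rw [← sub_eq_zero, ← intervalIntegral.integral_sub hint₁ hint₂,
    intervalIntegral.integral_eq_sub_of_hasDerivAt (fun θ _ ↦ hwronskian θ) (hint₁.sub hint₂)]
  simp only [hfT.eq, hf'T.eq, hgT.eq, hg'T.eq, sub_self]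

theorem eq_fourierCoeff_zero {T : ℝ} [Fact (0 < T)] (g : C(AddCircle T, ℂ))
    (hg : ∀ n ≠ 0, fourierCoeff g n = 0) (x : AddCircle T) : g x = fourierCoeff g 0 := by
  have hsum : Summable (fourierCoeff g) := (hasSum_single 0 hg).summable
  have hvalue := (has_pointwise_sum_fourier_series_of_summable hsum x).unique
    (hasSum_single 0 fun n hn ↦ by rw [hg n hn, zero_smul])
  simpa only [fourier_zero, smul_eq_mul, mul_one] using hvalue

theorem mul_two_pi_eq_integral_of_integral_mul_cos_eq_zero {f : ℝ → ℝ} (hf : Continuous f)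
    (hper : Function.Periodic f (2 * π))
    (hcos : ∀ n : ℤ, n ≠ 0 → ∀ φ, ∫ θ in 0..2 * π, f θ * cos (n * θ + φ) = 0) (x : ℝ) :
    f x * (2 * π) = ∫ θ in 0..2 * π, f θ := by
  have : Fact (0 < 2 * π) := ⟨two_pi_pos⟩
  have hperℂ : Function.Periodic (fun θ ↦ (f θ : ℂ)) (2 * π) := fun θ ↦ by simp only [hper θ]
  let g : C(AddCircle (2 * π), ℂ) :=
    ⟨hperℂ.lift, continuous_quot_lift _ (Complex.continuous_ofReal.comp hf)⟩
  have hfourier (n : ℤ) (θ : ℝ) : fourier (-n) (θ : AddCircle (2 * π)) • g θ =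
      (f θ * cos (n * θ + 0) : ℝ) + (f θ * cos (n * θ + π / 2) : ℝ) * Complex.I := by
    have harg : 2 * (π : ℂ) * Complex.I * ((-n : ℤ) : ℂ) * θ / ((2 * π : ℝ) : ℂ) =
        ((-(n * θ) : ℝ) : ℂ) * Complex.I := by
      have : (π : ℂ) ≠ 0 := Complex.ofReal_ne_zero.2 pi_ne_zero
      push_cast
      field_simp
    rw [fourier_coe_apply, harg, Complex.exp_mul_I, ← Complex.ofReal_cos, ← Complex.ofReal_sin,
      cos_neg, sin_neg, cos_add_pi_div_two, add_zero]
    change (_ : ℂ) • (f θ : ℂ) = _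
    push_cast
    rw [smul_eq_mul]
    ring
  have hcoeff (n : ℤ) : fourierCoeff g n = (1 / (2 * π) : ℝ) •
      (((∫ θ in 0..2 * π, f θ * cos (n * θ + 0) : ℝ) : ℂ) +
        ((∫ θ in 0..2 * π, f θ * cos (n * θ + π / 2) : ℝ) : ℂ) * Complex.I) := by
    rw [fourierCoeff_eq_intervalIntegral _ _ 0, zero_add]
    simp only [hfourier]
    rw [intervalIntegral.integral_add (Continuous.intervalIntegrable (by fun_prop) _ _)
      (Continuous.intervalIntegrable (by fun_prop) _ _), intervalIntegral.integral_mul_const,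
      intervalIntegral.integral_ofReal, intervalIntegral.integral_ofReal]
  have hmean : (f x : ℂ) = fourierCoeff g 0 :=
    eq_fourierCoeff_zero g (fun n hn ↦ by rw [hcoeff, hcos n hn, hcos n hn]; simp) x
  rw [hcoeff] at hmean
  simp only [Int.cast_zero, zero_mul, zero_add, cos_zero, cos_pi_div_two, mul_one, mul_zero,
    intervalIntegral.integral_zero, Complex.ofReal_zero, add_zero, Complex.real_smul] at hmean
  have hmean' : f x = 1 / (2 * π) * ∫ θ in 0..2 * π, f θ := by exact_mod_cast hmean
  rw [hmean']
  field_simp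

-- Completing the square gives `2 v' (g v - b v') ≤ K² v² / (2 β)` and `2 v v' x - v² ≤ v'² x²`.
theorem singular_energy_deriv_le {x c g b v v' v'' k K β : ℝ} (hx : 0 < x) (hk : 0 < k)
    (hβ : 0 < β) (hode : c * v'' = g * v - b * v') (hc : k * x ≤ c) (hb : β ≤ b) (hg : |g| ≤ K) :
    2 * v' * v'' + (2 * v * v' * x - v ^ 2) / x ^ 2 ≤
      (K ^ 2 / (2 * β * k) + 1) * (v' ^ 2 + v ^ 2 / x) := by
  have hc0 : 0 < c := (mul_pos hk hx).trans_le hc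
  have hgK : g ^ 2 * v ^ 2 ≤ K ^ 2 * v ^ 2 :=
    mul_le_mul_of_nonneg_right (sq_le_sq' (abs_le.1 hg).1 (abs_le.1 hg).2) (sq_nonneg v)
  have hsquare : c * (2 * v' * v'') ≤ K ^ 2 * v ^ 2 / (2 * β) := by
    rw [le_div_iff₀ (by positivity)]
    have hcv : c * (2 * v' * v'') = 2 * v' * (g * v - b * v') := by rw [← hode]; ring
    rw [hcv]
    nlinarith [sq_nonneg (2 * β * v' - g * v), mul_nonneg (mul_nonneg hβ.le (sub_nonneg.2 hb))
      (sq_nonneg v')]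
  have hfirst : 2 * v' * v'' ≤ K ^ 2 / (2 * β * k) * (v ^ 2 / x) :=
    calc 2 * v' * v'' ≤ K ^ 2 * v ^ 2 / (2 * β) / c := by rwa [le_div_iff₀' hc0]
      _ ≤ K ^ 2 * v ^ 2 / (2 * β) / (k * x) := by gcongr
      _ = K ^ 2 / (2 * β * k) * (v ^ 2 / x) := by field_simp
  have hsecond : (2 * v * v' * x - v ^ 2) / x ^ 2 ≤ v' ^ 2 := by
    rw [div_le_iff₀ (by positivity)]
    nlinarith [sq_nonneg (v' * x - v)]
  have : 0 ≤ K ^ 2 / (2 * β * k) * v' ^ 2 := by positivity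
  have : 0 ≤ v ^ 2 / x := by positivity
  linarith

theorem eq_zero_of_singular_ode {c g b v v' v'' : ℝ → ℝ} {R T k K β : ℝ} (hk : 0 < k)
    (hβ : 0 < β) (hv : ∀ r ∈ Ico R T, HasDerivAt v (v' r) r)
    (hv' : ∀ r ∈ Ico R T, HasDerivAt v' (v'' r) r)
    (hode : ∀ r ∈ Ioo R T, c r * v'' r = g r * v r - b r * v' r)
    (hc : ∀ r ∈ Ioo R T, k * (r - R) ≤ c r) (hb : ∀ r ∈ Ioo R T, β ≤ b r)
    (hg : ∀ r ∈ Ioo R T, |g r| ≤ K) (hvR : v R = 0) (hv'R : v' R = 0) :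
    ∀ r ∈ Ico R T, v r = 0 := by
  intro r hr
  -- `E = v'² + v² / (r - R)`; the divided slope provides the value at `r = R`.
  let E : ℝ → ℝ := fun r ↦ v' r ^ 2 + v r * dslope v R r
  have hE_eq {r : ℝ} (hr : R < r) : E r = v' r ^ 2 + v r ^ 2 / (r - R) := by
    simp only [E, dslope_of_ne _ hr.ne', slope_def_field, hvR, sub_zero]
    ring
  have hE_cont : ContinuousOn E (Ico R T) := fun r hr ↦ by
    have hds : ContinuousAt (dslope v R) r := by
      rcases eq_or_ne r R with rfl | hne
      · exact continuousAt_dslope_same.2 (hv r hr).differentiableAt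
      · exact (continuousAt_dslope_of_ne hne).2 (hv r hr).continuousAt
    exact (((hv' r hr).continuousAt.pow 2).add
      ((hv r hr).continuousAt.mul hds)).continuousWithinAt
  have hE_deriv (r : ℝ) (hr : r ∈ Ioo R T) : HasDerivAt E
      (2 * v' r * v'' r + (2 * v r * v' r * (r - R) - v r ^ 2) / (r - R) ^ 2) r := by
    have hr' := Ioo_subset_Ico_self hr
    refine HasDerivAt.congr_of_eventuallyEq ?_
      ((eventually_gt_nhds hr.1).mono fun _ hs ↦ hE_eq hs)
    refine (((hv' r hr').pow 2).add (((hv r hr').pow 2).div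
      ((hasDerivAt_id r).sub_const R) (sub_pos.2 hr.1).ne')).congr_deriv ?_
    simp only [id, Nat.cast_ofNat, Nat.add_one_sub_one, pow_one, mul_one, Pi.pow_apply]
  have hE_nonpos : E r ≤ 0 := by
    refine nonpos_of_deriv_le_mul (L := K ^ 2 / (2 * β * k) + 1) hE_cont hE_deriv (fun s hs ↦ ?_)
      (by simp only [E, hvR, hv'R]; norm_num) r hr
    rw [hE_eq hs.1]
    exact singular_energy_deriv_le (sub_pos.2 hs.1) hk hβ (hode s hs) (hc s hs) (hb s hs) (hg s hs)
  rcases hr.1.eq_or_lt with rfl | hlt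
  · exact hvR
  rw [hE_eq hlt] at hE_nonpos
  have hsq : v r ^ 2 / (r - R) = 0 :=
    le_antisymm (by linarith [sq_nonneg (v' r)])
      (div_nonneg (sq_nonneg _) (sub_nonneg.2 hlt.le))
  simpa [(sub_pos.2 hlt).ne'] using hsq

theorem hasDerivAt_integral_of_continuousOn_Ioo {f : ℝ → ℝ} {a b x₀ x : ℝ}
    (hf : ContinuousOn f (Ioo a b)) (hx₀ : x₀ ∈ Ioo a b) (hx : x ∈ Ioo a b) :
    HasDerivAt (fun x ↦ ∫ s in x₀..x, f s) (f x) x :=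
  intervalIntegral.integral_hasDerivAt_right
    ((hf.mono (ordConnected_Ioo.uIcc_subset hx₀ hx)).intervalIntegrable)
    (hf.stronglyMeasurableAtFilter isOpen_Ioo x hx) (hf.continuousAt (isOpen_Ioo.mem_nhds hx))

theorem eventually_pos_nhdsGT_of_continuousOn_Icc {f : ℝ → ℝ} {x y : ℝ} (hxy : x < y)
    (hf : ContinuousOn f (Icc x y)) (hfx : 0 < f x) : ∀ᶠ r in 𝓝[>] x, 0 < f r :=
  ((hf x (left_mem_Icc.2 hxy.le)).eventually_const_lt hfx).filter_mono
    (nhdsWithin_le_of_mem (mem_of_superset (Ioo_mem_nhdsGT hxy) Ioo_subset_Icc_self))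

/-! ### Sturm–Liouville form of a mixed-type radial operator -/

/-- The coefficients of an operator `a (u_r / r + u_θθ / r²) + c u_rr + b u_r` on the unit disc that
is elliptic for `r < R`, hyperbolic for `r > R`, and whose radial part degenerates to first order
on the circle `r = R`. The sign of `c` and the simplicity of its zero are both encoded in the
positivity of the slope `c r / (r - R)`. -/
structure MixedTypeCoeffs (a b c : ℝ → ℝ) (R : ℝ) : Prop where
  mem_Ioo : R ∈ Ioo (0 : ℝ) 1
  continuousOn_a : ContinuousOn a (Icc 0 1)
  continuousOn_b : ContinuousOn b (Icc 0 1)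
  continuousOn_c : ContinuousOn c (Icc 0 1)
  c_eq_zero : c R = 0
  differentiableAt_c : DifferentiableAt ℝ c R
  dslope_c_pos : ∀ r ∈ Icc (0 : ℝ) 1, 0 < dslope c R r
  a_neg : ∀ r ∈ Icc 0 R, a r < 0
  first_order_pos : ∀ r ∈ Icc R 1, 0 < a r + r * b r

/-- `p` is a positive Sturm–Liouville integrating factor for `c u'' + (a / r + b) u'` on `(0, R)`,
in the sense that `(p / c) (c u'' + (a / r + b) u') = (p u')'` there. -/
structure IsIntegratingFactor (a b c : ℝ → ℝ) (R : ℝ) (p : ℝ → ℝ) : Prop where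
  pos : ∀ r ∈ Ioo 0 R, 0 < p r
  hasDerivAt : ∀ r ∈ Ioo 0 R, HasDerivAt p (p r * ((a r + r * b r) / (r * c r))) r

/-- The weight `w` of the Sturm–Liouville problem with integrating factor `p` and leading
coefficient `c`. -/
noncomputable def slWeight (p c : ℝ → ℝ) (r : ℝ) : ℝ := -p r / c r

/-- The coefficient `q` of `ν²` in the Sturm–Liouville form of the `ν`-th angular mode. -/
noncomputable def slPotential (p a c : ℝ → ℝ) (r : ℝ) : ℝ := -(p r / r ^ 2) * (a r / c r)

namespace MixedTypeCoeffs

variable {a b c : ℝ → ℝ} {R : ℝ}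

theorem Icc_subset (h : MixedTypeCoeffs a b c R) : Icc 0 R ⊆ Icc (0 : ℝ) 1 :=
  Icc_subset_Icc_right h.mem_Ioo.2.le

theorem c_eq_mul_dslope (h : MixedTypeCoeffs a b c R) (r : ℝ) : c r = (r - R) * dslope c R r := by
  simpa [h.c_eq_zero] using (sub_smul_dslope c R r).symm

theorem c_neg (h : MixedTypeCoeffs a b c R) {r : ℝ} (hr : r ∈ Ico 0 R) : c r < 0 := by
  rw [h.c_eq_mul_dslope]
  exact mul_neg_of_neg_of_pos (sub_neg.2 hr.2)
    (h.dslope_c_pos r (h.Icc_subset (Ico_subset_Icc_self hr)))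

theorem continuousOn_dslope_c (h : MixedTypeCoeffs a b c R) :
    ContinuousOn (dslope c R) (Icc 0 1) :=
  (continuousOn_dslope (Icc_mem_nhds h.mem_Ioo.1 h.mem_Ioo.2)).2
    ⟨h.continuousOn_c, h.differentiableAt_c⟩

theorem continuousOn_first_order (h : MixedTypeCoeffs a b c R) :
    ContinuousOn (fun r ↦ a r + r * b r) (Icc 0 1) :=
  h.continuousOn_a.add (continuousOn_id.mul h.continuousOn_b)

theorem exists_mul_sub_le_c (h : MixedTypeCoeffs a b c R) :
    ∃ k > 0, ∀ r ∈ Ioo R 1, k * (r - R) ≤ c r := by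
  obtain ⟨r₀, hr₀, hmin⟩ :=
    isCompact_Icc.exists_isMinOn (nonempty_Icc.2 zero_le_one) h.continuousOn_dslope_c
  refine ⟨dslope c R r₀, h.dslope_c_pos r₀ hr₀, fun r hr ↦ ?_⟩
  rw [h.c_eq_mul_dslope r, mul_comm]
  exact mul_le_mul_of_nonneg_left (hmin ⟨(h.mem_Ioo.1.trans hr.1).le, hr.2.le⟩)
    (sub_nonneg.2 hr.1.le)

theorem exists_le_first_order_div (h : MixedTypeCoeffs a b c R) :
    ∃ β > 0, ∀ r ∈ Ioo R 1, β ≤ a r / r + b r := by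
  obtain ⟨r₀, hr₀, hmin⟩ := isCompact_Icc.exists_isMinOn (nonempty_Icc.2 h.mem_Ioo.2.le)
    (h.continuousOn_first_order.mono (Icc_subset_Icc_left h.mem_Ioo.1.le))
  refine ⟨a r₀ + r₀ * b r₀, h.first_order_pos r₀ hr₀, fun r hr ↦ ?_⟩
  have hr0 : 0 < r := h.mem_Ioo.1.trans hr.1
  have hle : a r₀ + r₀ * b r₀ ≤ a r + r * b r := hmin (Ioo_subset_Icc_self hr)
  calc a r₀ + r₀ * b r₀ ≤ a r + r * b r := hle
    _ ≤ (a r + r * b r) / r := le_div_self ((h.first_order_pos r₀ hr₀).le.trans hle) hr0 hr.2.le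
    _ = a r / r + b r := by field_simp

theorem eventually_pos_nhdsLT (h : MixedTypeCoeffs a b c R) {f : ℝ → ℝ}
    (hf : ContinuousOn f (Icc 0 1)) (hfR : 0 < f R) : ∀ᶠ r in 𝓝[<] R, 0 < f r :=
  ((hf.continuousAt (Icc_mem_nhds h.mem_Ioo.1 h.mem_Ioo.2)).eventually_const_lt hfR).filter_mono
    nhdsWithin_le_nhds

end MixedTypeCoeffs

namespace IsIntegratingFactor

variable {a b c p : ℝ → ℝ} {R : ℝ}

theorem continuousOn (hp : IsIntegratingFactor a b c R p) : ContinuousOn p (Ioo 0 R) :=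
  fun r hr ↦ (hp.hasDerivAt r hr).continuousAt.continuousWithinAt

theorem slWeight_pos (hp : IsIntegratingFactor a b c R p) (h : MixedTypeCoeffs a b c R) {r : ℝ}
    (hr : r ∈ Ioo 0 R) : 0 < slWeight p c r :=
  div_pos_of_neg_of_neg (neg_neg_of_pos (hp.pos r hr)) (h.c_neg (Ioo_subset_Ico_self hr))

theorem continuousOn_slWeight (hp : IsIntegratingFactor a b c R p) (h : MixedTypeCoeffs a b c R) :
    ContinuousOn (slWeight p c) (Ioo 0 R) :=
  hp.continuousOn.neg.div
    (h.continuousOn_c.mono (Ioo_subset_Icc_self.trans h.Icc_subset))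
    fun _ hr ↦ (h.c_neg (Ioo_subset_Ico_self hr)).ne

theorem continuousOn_slWeight_div (hp : IsIntegratingFactor a b c R p)
    (h : MixedTypeCoeffs a b c R) : ContinuousOn (fun r ↦ slWeight p c r / r) (Ioo 0 R) :=
  (hp.continuousOn_slWeight h).div continuousOn_id fun _ hr ↦ hr.1.ne'

theorem hasDerivAt_slWeight (hp : IsIntegratingFactor a b c R p) (h : MixedTypeCoeffs a b c R)
    {r : ℝ} (hr : r ∈ Ioo 0 R) :
    HasDerivAt p (-(slWeight p c r / r * (a r + r * b r))) r := by
  refine (hp.hasDerivAt r hr).congr_deriv ?_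
  have := (h.c_neg (Ioo_subset_Ico_self hr)).ne
  have := hr.1.ne'
  simp only [slWeight]
  field_simp

-- The indicial exponent of `p` at the origin is `a 0 / c 0 > 0`; half of it leaves room to spare.
theorem tendsto_zero_nhdsGT (hp : IsIntegratingFactor a b c R p) (h : MixedTypeCoeffs a b c R) :
    Tendsto p (𝓝[>] 0) (𝓝 0) := by
  have ha := h.a_neg 0 ⟨le_rfl, h.mem_Ioo.1.le⟩
  have hc := h.c_neg ⟨le_rfl, h.mem_Ioo.1⟩
  have hmem : ∀ᶠ r in 𝓝[>] (0 : ℝ), r ∈ Ioo 0 R := Ioo_mem_nhdsGT h.mem_Ioo.1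
  have hev : ∀ᶠ r in 𝓝[>] (0 : ℝ), 0 < a 0 / (2 * c 0) * c r - (a r + r * b r) := by
    refine eventually_pos_nhdsGT_of_continuousOn_Icc zero_lt_one
      ((h.continuousOn_c.const_mul _).sub h.continuousOn_first_order) ?_
    have : a 0 / (2 * c 0) * c 0 - (a 0 + 0 * b 0) = -a 0 / 2 := by
      have := hc.ne
      field_simp
      ring
    linarith
  refine tendsto_zero_nhdsGT_of_div_le_logDeriv
    (div_pos_of_neg_of_neg ha (by linarith : 2 * c 0 < 0)) (hmem.mono hp.pos)
    (hmem.mono hp.hasDerivAt) ?_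
  filter_upwards [hmem, hev] with r hr hpos
  have hcr := h.c_neg (Ioo_subset_Ico_self hr)
  have hsplit : (a r + r * b r) / (r * c r) = (a r + r * b r) / c r / r := by
    rw [mul_comm r (c r), div_div]
  rw [sub_zero, hsplit]
  refine div_le_div_of_nonneg_right ?_ hr.1.le
  rw [le_div_iff_of_neg hcr]
  linarith

theorem tendsto_zero_nhdsLT (hp : IsIntegratingFactor a b c R p) (h : MixedTypeCoeffs a b c R) :
    Tendsto p (𝓝[<] R) (𝓝 0) := by
  have hm := h.first_order_pos R ⟨le_rfl, h.mem_Ioo.2.le⟩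
  have hd := h.dslope_c_pos R (Ioo_subset_Icc_self h.mem_Ioo)
  have hR := h.mem_Ioo.1
  have hmem : ∀ᶠ r in 𝓝[<] R, r ∈ Ioo 0 R := Ioo_mem_nhdsLT hR
  set α := (a R + R * b R) / (2 * R * dslope c R R) with hα
  have hev : ∀ᶠ r in 𝓝[<] R, 0 < (a r + r * b r) - α * (r * dslope c R r) := by
    refine h.eventually_pos_nhdsLT (h.continuousOn_first_order.sub
      ((continuousOn_id.mul h.continuousOn_dslope_c).const_mul _)) ?_
    have : a R + R * b R - α * (R * dslope c R R) = (a R + R * b R) / 2 := by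
      rw [hα]; field_simp; ring
    simp only [this]
    linarith
  refine tendsto_zero_nhdsLT_of_logDeriv_le_neg_div (α := α) (by positivity) (hmem.mono hp.pos)
    (hmem.mono hp.hasDerivAt) ?_
  filter_upwards [hmem, hev] with r hr hpos
  have hdr := h.dslope_c_pos r (h.Icc_subset (Ioo_subset_Icc_self hr))
  have hrR : 0 < R - r := sub_pos.2 hr.2
  have hr0 := hr.1
  calc (a r + r * b r) / (r * c r)
      = -((a r + r * b r) / (r * dslope c R r) / (R - r)) := by
        rw [h.c_eq_mul_dslope r, ← neg_sub R r]; field_simp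
    _ ≤ -(α / (R - r)) := by
        gcongr
        rw [le_div_iff₀ (by positivity)]
        linarith

-- `p' = -(w / r) (a + r b)` has a sign on the interval and dominates `w / r`.
theorem intervalIntegrable_slWeight_div_of_le (hp : IsIntegratingFactor a b c R p)
    (h : MixedTypeCoeffs a b c R) {x y C : ℝ} (hx : 0 ≤ x) (hxy : x < y) (hy : y ≤ R)
    (hC : ∀ r ∈ Ioo x y, 1 ≤ C * (a r + r * b r)) :
    IntervalIntegrable (fun r ↦ slWeight p c r / r) volume x y := by
  have hsub : Ioo x y ⊆ Ioo 0 R := Ioo_subset_Ioo hx hy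
  have hderiv (r : ℝ) (hr : r ∈ Ioo 0 R) :
      HasDerivAt (fun r ↦ -C * p r) (slWeight p c r / r * (C * (a r + r * b r))) r :=
    ((hp.hasDerivAt_slWeight h hr).const_mul (-C)).congr_deriv (by ring)
  have hlim_left : ∃ l, Tendsto (fun r ↦ -C * p r) (𝓝[>] x) (𝓝 l) := by
    rcases hx.eq_or_lt with rfl | hx
    · exact ⟨_, (hp.tendsto_zero_nhdsGT h).const_mul _⟩
    · exact ⟨_, (hderiv x ⟨hx, hxy.trans_le hy⟩).continuousAt.tendsto.mono_left nhdsWithin_le_nhds⟩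
  have hlim_right : ∃ l, Tendsto (fun r ↦ -C * p r) (𝓝[<] y) (𝓝 l) := by
    rcases hy.eq_or_lt with rfl | hy
    · exact ⟨_, (hp.tendsto_zero_nhdsLT h).const_mul _⟩
    · exact ⟨_, (hderiv y ⟨hx.trans_lt hxy, hy⟩).continuousAt.tendsto.mono_left nhdsWithin_le_nhds⟩
  have hpos (r : ℝ) (hr : r ∈ Ioo x y) : 0 ≤ slWeight p c r / r :=
    div_nonneg (hp.slWeight_pos h (hsub hr)).le (hsub hr).1.le
  exact intervalIntegrable_of_le_deriv hxy (fun r hr ↦ hderiv r (hsub hr)) hlim_left.choose_spec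
    hlim_right.choose_spec ((hp.continuousOn_slWeight_div h).mono hsub) hpos
    fun r hr ↦ le_mul_of_one_le_right (hpos r hr) (hC r hr)

theorem intervalIntegrable_slWeight_div (hp : IsIntegratingFactor a b c R p)
    (h : MixedTypeCoeffs a b c R) :
    IntervalIntegrable (fun r ↦ slWeight p c r / r) volume 0 R := by
  obtain ⟨x, hx, hleft⟩ : ∃ x ∈ Ioc 0 R, ∀ r ∈ Ioo 0 x, 0 < 2 / a 0 * (a r + r * b r) - 1 := by
    have ha := h.a_neg 0 ⟨le_rfl, h.mem_Ioo.1.le⟩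
    have hev : ∀ᶠ r in 𝓝[>] (0 : ℝ), 0 < 2 / a 0 * (a r + r * b r) - 1 :=
      eventually_pos_nhdsGT_of_continuousOn_Icc zero_lt_one
        ((h.continuousOn_first_order.const_mul _).sub continuousOn_const)
        (by rw [zero_mul, add_zero, div_mul_cancel₀ _ ha.ne]; norm_num)
    exact (mem_nhdsGT_iff_exists_mem_Ioc_Ioo_subset h.mem_Ioo.1).1 hev
  obtain ⟨y, hy, hright⟩ : ∃ y ∈ Ico 0 R,
      ∀ r ∈ Ioo y R, 0 < 2 / (a R + R * b R) * (a r + r * b r) - 1 := by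
    have hm := h.first_order_pos R ⟨le_rfl, h.mem_Ioo.2.le⟩
    have hev : ∀ᶠ r in 𝓝[<] R, 0 < 2 / (a R + R * b R) * (a r + r * b r) - 1 :=
      h.eventually_pos_nhdsLT ((h.continuousOn_first_order.const_mul _).sub continuousOn_const)
        (by rw [div_mul_cancel₀ _ hm.ne']; norm_num)
    exact (mem_nhdsLT_iff_exists_mem_Ico_Ioo_subset h.mem_Ioo.1).1 hev
  obtain ⟨x', hx'⟩ := exists_between hx.1
  obtain ⟨y', hy'⟩ := exists_between hy.2
  have hx'R : x' ∈ Ioo 0 R := ⟨hx'.1, hx'.2.trans_le hx.2⟩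
  have hy'R : y' ∈ Ioo 0 R := ⟨hy.1.trans_lt hy'.1, hy'.2⟩
  have hzero_x' := hp.intervalIntegrable_slWeight_div_of_le h le_rfl hx'.1 hx'R.2.le
    fun r hr ↦ (sub_pos.1 (hleft r ⟨hr.1, hr.2.trans hx'.2⟩)).le
  have hy'_R := hp.intervalIntegrable_slWeight_div_of_le h hy'R.1.le hy'.2 le_rfl
    fun r hr ↦ (sub_pos.1 (hright r ⟨hy'.1.trans hr.1, hr.2⟩)).le
  exact (hzero_x'.trans ((hp.continuousOn_slWeight_div h).mono
    (ordConnected_Ioo.uIcc_subset hx'R hy'R)).intervalIntegrable).trans hy'_R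

theorem intervalIntegrable_slWeight_div_mul (hp : IsIntegratingFactor a b c R p)
    (h : MixedTypeCoeffs a b c R) {f : ℝ → ℝ} (hf : ContinuousOn f (Icc 0 R)) :
    IntervalIntegrable (fun r ↦ slWeight p c r / r * f r) volume 0 R :=
  (hp.intervalIntegrable_slWeight_div h).mul_continuousOn (by rwa [uIcc_of_le h.mem_Ioo.1.le])

theorem intervalIntegrable_slWeight_mul (hp : IsIntegratingFactor a b c R p)
    (h : MixedTypeCoeffs a b c R) {f : ℝ → ℝ} (hf : ContinuousOn f (Icc 0 R)) :
    IntervalIntegrable (fun r ↦ slWeight p c r * f r) volume 0 R := by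
  refine (hp.intervalIntegrable_slWeight_div_mul h (continuousOn_id.mul hf)).congr_uIoo ?_
  rw [uIoo_of_le h.mem_Ioo.1.le]
  intro r hr
  have := hr.1.ne'
  simp only [Pi.mul_apply, id]
  field_simp

theorem intervalIntegrable_mul (hp : IsIntegratingFactor a b c R p)
    (h : MixedTypeCoeffs a b c R) {f : ℝ → ℝ} (hf : ContinuousOn f (Icc 0 R)) :
    IntervalIntegrable (fun r ↦ p r * f r) volume 0 R := by
  refine (hp.intervalIntegrable_slWeight_mul h
    ((h.continuousOn_c.mono h.Icc_subset).neg.mul hf)).congr_uIoo ?_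
  rw [uIoo_of_le h.mem_Ioo.1.le]
  intro r hr
  have := (h.c_neg (Ioo_subset_Ico_self hr)).ne
  simp only [slWeight, Pi.mul_apply, Pi.neg_apply]
  field_simp

theorem integral_slWeight_mul_eq_zero (hp : IsIntegratingFactor a b c R p)
    (h : MixedTypeCoeffs a b c R) {A A' : ℝ → ℝ} (hA : ContinuousOn A (Icc 0 R))
    (hA' : ∀ r ∈ Ioo 0 R, HasDerivAt A (A' r) r)
    (hint : IntervalIntegrable
      (fun r ↦ slWeight p c r * (c r * A' r + (a r / r + b r) * A r)) volume 0 R) :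
    ∫ r in 0..R, slWeight p c r * (c r * A' r + (a r / r + b r) * A r) = 0 := by
  have hR := h.mem_Ioo.1
  have hderiv (r : ℝ) (hr : r ∈ Ioo 0 R) : HasDerivAt (fun r ↦ -(p r * A r))
      (slWeight p c r * (c r * A' r + (a r / r + b r) * A r)) r := by
    refine ((hp.hasDerivAt r hr).mul (hA' r hr)).neg.congr_deriv ?_
    have := (h.c_neg (Ioo_subset_Ico_self hr)).ne
    have := hr.1.ne'
    simp only [slWeight]
    field_simp
    ring
  have hlim {l : Filter ℝ} {x : ℝ} (hpl : Tendsto p l (𝓝 0)) (hAl : Tendsto A l (𝓝 (A x))) :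
      Tendsto (fun r ↦ -(p r * A r)) l (𝓝 0) := by
    simpa using (hpl.mul hAl).neg
  have hAzero : Tendsto A (𝓝[>] 0) (𝓝 (A 0)) :=
    (hA 0 ⟨le_rfl, hR.le⟩).mono_left
      (nhdsWithin_le_of_mem (mem_of_superset (Ioo_mem_nhdsGT hR) Ioo_subset_Icc_self))
  have hAR : Tendsto A (𝓝[<] R) (𝓝 (A R)) :=
    (hA R ⟨hR.le, le_rfl⟩).mono_left
      (nhdsWithin_le_of_mem (mem_of_superset (Ioo_mem_nhdsLT hR) Ioo_subset_Icc_self))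
  rw [intervalIntegral.integral_eq_sub_of_hasDerivAt_of_tendsto hR hderiv hint
    (hlim (hp.tendsto_zero_nhdsGT h) hAzero) (hlim (hp.tendsto_zero_nhdsLT h) hAR), sub_zero]

theorem integral_mul_sq_nonneg (hp : IsIntegratingFactor a b c R p) (h : MixedTypeCoeffs a b c R)
    {f : ℝ → ℝ} : 0 ≤ ∫ r in 0..R, p r * f r ^ 2 :=
  integral_nonneg_of_nonneg_on_Ioo h.mem_Ioo.1.le
    fun r hr ↦ mul_nonneg (hp.pos r hr).le (sq_nonneg _)

theorem integral_slPotential_mul_sq_nonpos (hp : IsIntegratingFactor a b c R p)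
    (h : MixedTypeCoeffs a b c R) {f : ℝ → ℝ} :
    ∫ r in 0..R, slPotential p a c r * f r ^ 2 ≤ 0 := by
  rw [← neg_nonneg, ← intervalIntegral.integral_neg]
  refine integral_nonneg_of_nonneg_on_Ioo h.mem_Ioo.1.le fun r hr ↦ ?_
  have hac : 0 < a r / c r :=
    div_pos_of_neg_of_neg (h.a_neg r (Ioo_subset_Icc_self hr)) (h.c_neg (Ioo_subset_Ico_self hr))
  have hpr := hp.pos r hr
  rw [slPotential, neg_mul, neg_mul, neg_neg]
  positivity

end IsIntegratingFactor

/-! ### Radial solutions -/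

/-- `v` solves, with eigenvalue `lam`, the radial equation of the `ν`-th angular mode on `(0, 1)`,
and extends regularly through the centre; `v'` and `v''` are its derivatives. -/
structure IsRadialSol (a b c : ℝ → ℝ) (lam ν : ℝ) (v v' v'' : ℝ → ℝ) : Prop where
  hasDerivAt : ∀ r ∈ Ioo (-1 : ℝ) 1, HasDerivAt v (v' r) r
  hasDerivAt_deriv : ∀ r ∈ Ioo (-1 : ℝ) 1, HasDerivAt v' (v'' r) r
  ode : ∀ r ∈ Ioo (0 : ℝ) 1,
    a r * (v' r / r - ν ^ 2 / r ^ 2 * v r) + c r * v'' r + b r * v' r = lam * v r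
  apply_zero : ν ≠ 0 → v 0 = 0

namespace IsRadialSol

variable {a b c p v v' v'' : ℝ → ℝ} {lam ν R : ℝ}

theorem continuousOn (hv : IsRadialSol a b c lam ν v v' v'') (h : MixedTypeCoeffs a b c R) :
    ContinuousOn v (Icc 0 R) := fun r hr ↦
  (hv.hasDerivAt r ⟨by linarith [hr.1], hr.2.trans_lt h.mem_Ioo.2⟩).continuousAt.continuousWithinAt

theorem continuousOn_deriv (hv : IsRadialSol a b c lam ν v v' v'')
    (h : MixedTypeCoeffs a b c R) : ContinuousOn v' (Icc 0 R) := fun r hr ↦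
  (hv.hasDerivAt_deriv r
    ⟨by linarith [hr.1], hr.2.trans_lt h.mem_Ioo.2⟩).continuousAt.continuousWithinAt

theorem continuousOn_dslope (hv : IsRadialSol a b c lam ν v v' v'')
    (h : MixedTypeCoeffs a b c R) : ContinuousOn (dslope v 0) (Icc 0 R) := by
  have hnhds : Ioo (-1 : ℝ) 1 ∈ 𝓝 0 := Ioo_mem_nhds (by norm_num) one_pos
  have hcont : ContinuousOn v (Ioo (-1) 1) :=
    fun r hr ↦ (hv.hasDerivAt r hr).continuousAt.continuousWithinAt
  exact ((_root_.continuousOn_dslope hnhds).2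
    ⟨hcont, (hv.hasDerivAt 0 (mem_of_mem_nhds hnhds)).differentiableAt⟩).mono
    fun r hr ↦ ⟨by linarith [hr.1], hr.2.trans_lt h.mem_Ioo.2⟩

theorem intervalIntegrable_slPotential_mul_sq (hv : IsRadialSol a b c lam ν v v' v'')
    (h : MixedTypeCoeffs a b c R) (hp : IsIntegratingFactor a b c R p) :
    IntervalIntegrable (fun r ↦ ν ^ 2 * (slPotential p a c r * v r ^ 2)) volume 0 R := by
  rcases eq_or_ne ν 0 with rfl | hν
  · simp
  -- `q v²` is `w / r` times a continuous function, because `v r / r` is continuous.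
  refine ((hp.intervalIntegrable_slWeight_div_mul h ((h.continuousOn_a.mono h.Icc_subset).mul
    ((hv.continuousOn h).mul (hv.continuousOn_dslope h)))).const_mul (ν ^ 2)).congr_uIoo ?_
  rw [uIoo_of_le h.mem_Ioo.1.le]
  intro r hr
  have := (h.c_neg (Ioo_subset_Ico_self hr)).ne
  have := hr.1.ne'
  simp only [slWeight, slPotential, Pi.mul_apply, dslope_of_ne _ hr.1.ne', slope_def_field,
    hv.apply_zero hν, sub_zero]
  field_simp

theorem integral_mul_sq_deriv_eq (hv : IsRadialSol a b c lam ν v v' v'')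
    (h : MixedTypeCoeffs a b c R) (hp : IsIntegratingFactor a b c R p) :
    ∫ r in 0..R, p r * v' r ^ 2 = lam * (∫ r in 0..R, slWeight p c r * v r ^ 2) +
      ν ^ 2 * ∫ r in 0..R, slPotential p a c r * v r ^ 2 := by
  have hpv : IntervalIntegrable (fun r ↦ p r * v' r ^ 2) volume 0 R :=
    hp.intervalIntegrable_mul h ((hv.continuousOn_deriv h).pow 2)
  have hwv : IntervalIntegrable (fun r ↦ lam * (slWeight p c r * v r ^ 2)) volume 0 R :=
    (hp.intervalIntegrable_slWeight_mul h ((hv.continuousOn h).pow 2)).const_mul lam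
  have hqv := hv.intervalIntegrable_slPotential_mul_sq h hp
  have hode : EqOn
      (fun r ↦ lam * (slWeight p c r * v r ^ 2) + ν ^ 2 * (slPotential p a c r * v r ^ 2) -
        p r * v' r ^ 2)
      (fun r ↦ slWeight p c r *
        (c r * (v' r * v' r + v r * v'' r) + (a r / r + b r) * (v r * v' r)))
      (Ioo 0 R) := fun r hr ↦ by
    have hc := (h.c_neg (Ioo_subset_Ico_self hr)).ne
    have hr0 := hr.1.ne'
    have hrad : c r * v'' r = lam * v r + ν ^ 2 * a r / r ^ 2 * v r - (a r / r + b r) * v' r := by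
      rw [← sub_eq_zero, ← sub_eq_zero.2 (hv.ode r ⟨hr.1, hr.2.trans h.mem_Ioo.2⟩)]
      ring
    have hexpand : c r * (v' r * v' r + v r * v'' r) + (a r / r + b r) * (v r * v' r) =
        c r * v' r ^ 2 + v r * (c r * v'' r + (a r / r + b r) * v' r) := by ring
    simp only [slWeight, slPotential]
    rw [hexpand, hrad]
    field_simp
    ring
  have hzero := hp.integral_slWeight_mul_eq_zero h
    ((hv.continuousOn h).mul (hv.continuousOn_deriv h))
    (fun r hr ↦ (hv.hasDerivAt r ⟨by linarith [hr.1], hr.2.trans h.mem_Ioo.2⟩).mul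
      (hv.hasDerivAt_deriv r ⟨by linarith [hr.1], hr.2.trans h.mem_Ioo.2⟩))
    (((hwv.add hqv).sub hpv).congr_uIoo (by rw [uIoo_of_le h.mem_Ioo.1.le]; exact hode))
  have hsplit := intervalIntegral.integral_congr_Ioo_of_le (μ := volume) h.mem_Ioo.1.le hode
  rw [intervalIntegral.integral_sub (hwv.add hqv) hpv, intervalIntegral.integral_add hwv hqv,
    intervalIntegral.integral_const_mul, intervalIntegral.integral_const_mul] at hsplit
  exact (sub_eq_zero.1 (hsplit.trans hzero)).symm

-- Past the degenerate circle the equation is a singular initial value problem at `r = R`.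
theorem eq_zero_of_eqOn_zero (hv : IsRadialSol a b c lam ν v v' v'')
    (h : MixedTypeCoeffs a b c R) (hzero : ∀ r ∈ Ioo 0 R, v r = 0) :
    ∀ r ∈ Ioo (0 : ℝ) 1, v r = 0 := by
  have hR := h.mem_Ioo
  have hextend {f : ℝ → ℝ} (hf : ContinuousOn f (Icc 0 R)) (hf0 : EqOn f 0 (Ioo 0 R)) : f R = 0 :=
    hf0.of_subset_closure hf continuousOn_const Ioo_subset_Icc_self
      (closure_Ioo hR.1.ne).superset ⟨hR.1.le, le_rfl⟩
  have hvR : v R = 0 := hextend (hv.continuousOn h) hzero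
  have hv'R : v' R = 0 := hextend (hv.continuousOn_deriv h) fun r hr ↦ by
    have hloc : v =ᶠ[𝓝 r] fun _ ↦ 0 := eventually_of_mem (Ioo_mem_nhds hr.1 hr.2) hzero
    exact ((hv.hasDerivAt r ⟨by linarith [hr.1], hr.2.trans hR.2⟩).congr_of_eventuallyEq
      hloc.symm).unique (hasDerivAt_const r 0)
  obtain ⟨k, hk, hck⟩ := h.exists_mul_sub_le_c
  obtain ⟨β, hβ, hbβ⟩ := h.exists_le_first_order_div
  have hg : ContinuousOn (fun r ↦ lam + ν ^ 2 * a r / r ^ 2) (Icc R 1) :=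
    continuousOn_const.add ((continuousOn_const.mul
      (h.continuousOn_a.mono (Icc_subset_Icc_left hR.1.le))).div (continuousOn_id.pow 2)
      fun r hr ↦ pow_ne_zero 2 (hR.1.trans_le hr.1).ne')
  obtain ⟨K, hK⟩ := isCompact_Icc.exists_bound_of_continuousOn hg
  have hmem {r : ℝ} (hr : r ∈ Ico R 1) : r ∈ Ioo (-1 : ℝ) 1 := ⟨by linarith [hr.1, hR.1], hr.2⟩
  intro r hr
  rcases lt_or_ge r R with hrR | hrR
  · exact hzero r ⟨hr.1, hrR⟩
  refine eq_zero_of_singular_ode hk hβ (fun r hr ↦ hv.hasDerivAt r (hmem hr))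
    (fun r hr ↦ hv.hasDerivAt_deriv r (hmem hr)) (fun r hr ↦ ?_) hck hbβ
    (fun r hr ↦ hK r (Ioo_subset_Icc_self hr)) hvR hv'R r ⟨hrR, hr.2⟩
  rw [← sub_eq_zero, ← sub_eq_zero.2 (hv.ode r ⟨hR.1.trans hr.1, hr.2⟩)]
  ring

theorem integral_slWeight_mul_sq_pos (hv : IsRadialSol a b c lam ν v v' v'')
    (h : MixedTypeCoeffs a b c R) (hp : IsIntegratingFactor a b c R p)
    (hne : ∃ r ∈ Ioo (0 : ℝ) 1, v r ≠ 0) : 0 < ∫ r in 0..R, slWeight p c r * v r ^ 2 := by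
  obtain ⟨r, hr, hvr⟩ : ∃ r ∈ Ioo 0 R, v r ≠ 0 := by
    contrapose! hne
    exact hv.eq_zero_of_eqOn_zero h hne
  have hcont := (hv.continuousOn h).pow 2
  exact integral_pos_of_continuousOn_Ioo (hp.intervalIntegrable_slWeight_mul h hcont)
    ((hp.continuousOn_slWeight h).mul (hcont.mono Ioo_subset_Icc_self))
    (fun s hs ↦ mul_nonneg (hp.slWeight_pos h hs).le (sq_nonneg _)) hr
    (mul_pos (hp.slWeight_pos h hr) (by positivity))

theorem eigenvalue_eq_rayleigh (hv : IsRadialSol a b c lam ν v v' v'')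
    (h : MixedTypeCoeffs a b c R) (hp : IsIntegratingFactor a b c R p)
    (hne : ∃ r ∈ Ioo (0 : ℝ) 1, v r ≠ 0) :
    lam = ((∫ r in 0..R, p r * v' r ^ 2) - ν ^ 2 * ∫ r in 0..R, slPotential p a c r * v r ^ 2) /
      ∫ r in 0..R, slWeight p c r * v r ^ 2 := by
  rw [eq_div_iff (hv.integral_slWeight_mul_sq_pos h hp hne).ne', hv.integral_mul_sq_deriv_eq h hp,
    add_sub_cancel_right]

theorem eigenvalue_nonneg (hv : IsRadialSol a b c lam ν v v' v'')
    (h : MixedTypeCoeffs a b c R) (hp : IsIntegratingFactor a b c R p)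
    (hne : ∃ r ∈ Ioo (0 : ℝ) 1, v r ≠ 0) : 0 ≤ lam := by
  rw [hv.eigenvalue_eq_rayleigh h hp hne]
  exact div_nonneg (sub_nonneg.2 ((mul_nonpos_of_nonneg_of_nonpos (sq_nonneg ν)
    (hp.integral_slPotential_mul_sq_nonpos h)).trans (hp.integral_mul_sq_nonneg h)))
    (hv.integral_slWeight_mul_sq_pos h hp hne).le

theorem sub_apply_zero (hv : IsRadialSol a b c 0 ν v v' v'') :
    IsRadialSol a b c 0 ν (fun r ↦ v r - v 0) v' v'' where
  hasDerivAt r hr := (hv.hasDerivAt r hr).sub_const _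
  hasDerivAt_deriv := hv.hasDerivAt_deriv
  ode r hr := by
    have hν : ν ^ 2 * v 0 = 0 := by
      by_cases hν : ν = 0
      · simp [hν]
      · simp [hv.apply_zero hν]
    have hode := hv.ode r hr
    rw [zero_mul] at hode ⊢
    linear_combination hode + a r / r ^ 2 * hν
  apply_zero _ := sub_self _

theorem eq_apply_zero (hv : IsRadialSol a b c 0 ν v v' v'') (h : MixedTypeCoeffs a b c R)
    (hp : IsIntegratingFactor a b c R p) : ∀ r ∈ Ioo (0 : ℝ) 1, v r = v 0 := by
  have henergy : ∫ r in 0..R, p r * v' r ^ 2 ≤ 0 := by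
    rw [hv.integral_mul_sq_deriv_eq h hp, zero_mul, zero_add]
    exact mul_nonpos_of_nonneg_of_nonpos (sq_nonneg ν) (hp.integral_slPotential_mul_sq_nonpos h)
  have hv'_zero : ∀ r ∈ Ioo 0 R, v' r = 0 := by
    contrapose! henergy
    obtain ⟨r, hr, hv'r⟩ := henergy
    have hcont := (hv.continuousOn_deriv h).pow 2
    exact integral_pos_of_continuousOn_Ioo (hp.intervalIntegrable_mul h hcont)
      (hp.continuousOn.mul (hcont.mono Ioo_subset_Icc_self))
      (fun s hs ↦ mul_nonneg (hp.pos s hs).le (sq_nonneg _)) hr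
      (mul_pos (hp.pos r hr) (by positivity))
  have hconst (r : ℝ) (hr : r ∈ Ioo 0 R) : v r = v 0 := by
    have hsub : Icc 0 r ⊆ Icc 0 R := Icc_subset_Icc_right hr.2.le
    obtain ⟨s, hs, hslope⟩ := exists_hasDerivAt_eq_slope v v' hr.1
      ((hv.continuousOn h).mono hsub)
      fun s hs ↦ hv.hasDerivAt s ⟨by linarith [hs.1], (hs.2.trans hr.2).trans h.mem_Ioo.2⟩
    rw [hv'_zero s ⟨hs.1, hs.2.trans hr.2⟩, sub_zero, eq_comm, div_eq_zero_iff] at hslope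
    exact sub_eq_zero.1 (hslope.resolve_right hr.1.ne')
  exact fun r hr ↦ sub_eq_zero.1
    (hv.sub_apply_zero.eq_zero_of_eqOn_zero h (fun s hs ↦ sub_eq_zero.2 (hconst s hs)) r hr)

end IsRadialSol

/-! ### Polar coordinates on the closed disc -/

theorem deriv_fst_eq_fderiv {G : ℝ × ℝ → ℝ} {q : ℝ × ℝ} (hG : DifferentiableAt ℝ G q) :
    deriv (fun t ↦ G (t, q.2)) q.1 = fderiv ℝ G q (1, 0) :=
  (HasFDerivAt.comp_hasDerivAt q.1 (f := fun t ↦ (t, q.2)) hG.hasFDerivAt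
    ((hasDerivAt_id q.1).prodMk (hasDerivAt_const q.1 q.2))).deriv

theorem deriv_snd_eq_fderiv {G : ℝ × ℝ → ℝ} {q : ℝ × ℝ} (hG : DifferentiableAt ℝ G q) :
    deriv (fun t ↦ G (q.1, t)) q.2 = fderiv ℝ G q (0, 1) :=
  (HasFDerivAt.comp_hasDerivAt q.2 (f := fun t ↦ (q.1, t)) hG.hasFDerivAt
    ((hasDerivAt_const q.2 q.1).prodMk (hasDerivAt_id q.2))).deriv

theorem contDiffOn_deriv_fst {G : ℝ × ℝ → ℝ} {U : Set (ℝ × ℝ)} {m : WithTop ℕ∞}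
    (hG : ContDiffOn ℝ (m + 1) G U) (hU : IsOpen U) :
    ContDiffOn ℝ m (fun q ↦ deriv (fun t ↦ G (t, q.2)) q.1) U :=
  ((hG.fderiv_of_isOpen hU le_rfl).clm_apply contDiffOn_const).congr fun _ hq ↦
    deriv_fst_eq_fderiv ((hG.contDiffAt (hU.mem_nhds hq)).differentiableAt (by simp))

theorem contDiffOn_deriv_snd {G : ℝ × ℝ → ℝ} {U : Set (ℝ × ℝ)} {m : WithTop ℕ∞}
    (hG : ContDiffOn ℝ (m + 1) G U) (hU : IsOpen U) :
    ContDiffOn ℝ m (fun q ↦ deriv (fun t ↦ G (q.1, t)) q.2) U :=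
  ((hG.fderiv_of_isOpen hU le_rfl).clm_apply contDiffOn_const).congr fun _ hq ↦
    deriv_snd_eq_fderiv ((hG.contDiffAt (hU.mem_nhds hq)).differentiableAt (by simp))

theorem hasDerivAt_fst_of_contDiffOn {G : ℝ × ℝ → ℝ} {U : Set (ℝ × ℝ)} (hU : IsOpen U)
    {m : WithTop ℕ∞} (hG : ContDiffOn ℝ (m + 1) G U) {r θ : ℝ} (hrθ : (r, θ) ∈ U) :
    HasDerivAt (fun t ↦ G (t, θ)) (deriv (fun t ↦ G (t, θ)) r) r :=
  (DifferentiableAt.comp r (f := fun t ↦ (t, θ))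
    ((hG.contDiffAt (hU.mem_nhds hrθ)).differentiableAt (by simp)) (by fun_prop)).hasDerivAt

theorem hasDerivAt_snd_of_contDiffOn {G : ℝ × ℝ → ℝ} {U : Set (ℝ × ℝ)} (hU : IsOpen U)
    {m : WithTop ℕ∞} (hG : ContDiffOn ℝ (m + 1) G U) {r θ : ℝ} (hrθ : (r, θ) ∈ U) :
    HasDerivAt (fun t ↦ G (r, t)) (deriv (fun t ↦ G (r, t)) θ) θ :=
  (DifferentiableAt.comp θ (f := fun t ↦ (r, t))
    ((hG.contDiffAt (hU.mem_nhds hrθ)).differentiableAt (by simp)) (by fun_prop)).hasDerivAt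

theorem contDiff_pol {n : WithTop ℕ∞} : ContDiff ℝ n fun q : ℝ × ℝ ↦ pol q.1 q.2 := by
  unfold pol
  have hofReal : ContDiff ℝ n ((↑) : ℝ → ℂ) := Complex.ofRealCLM.contDiff
  fun_prop

theorem norm_pol (r θ : ℝ) : ‖pol r θ‖ = |r| := by
  rw [pol, norm_mul, Complex.norm_exp_ofReal_mul_I, mul_one, Complex.norm_real, norm_eq_abs]

theorem pol_zero (θ : ℝ) : pol 0 θ = 0 := by simp [pol]

theorem pol_periodic (r : ℝ) : Function.Periodic (pol r) (2 * π) := fun θ ↦ by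
  simp only [pol, Complex.exp_mul_I, ← Complex.ofReal_cos, ← Complex.ofReal_sin, cos_add_two_pi,
    sin_add_two_pi]

theorem eq_pol_norm_arg (z : ℂ) : z = pol ‖z‖ z.arg := (Complex.norm_mul_exp_arg_mul_I z).symm

theorem pol_mem_closedBall {r : ℝ} (hr : r ∈ Icc (-1 : ℝ) 1) (θ : ℝ) :
    pol r θ ∈ Metric.closedBall 0 1 := by
  rw [mem_closedBall_zero_iff, norm_pol]
  exact abs_le.2 hr

theorem eq_const_of_eq_const_polar {F : ℂ → ℝ} {k : ℝ}
    (hF : ContinuousOn F (Metric.closedBall 0 1))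
    (hk : ∀ r ∈ Ioo (0 : ℝ) 1, ∀ θ, F (pol r θ) = k) : ∀ z ∈ Metric.closedBall 0 1, F z = k := by
  intro z hz
  have hpol : Continuous fun r ↦ pol r z.arg := by unfold pol; fun_prop
  have hray : ContinuousOn (fun r ↦ F (pol r z.arg)) (Icc 0 1) :=
    hF.comp hpol.continuousOn fun r hr ↦ pol_mem_closedBall ⟨by linarith [hr.1], hr.2⟩ _
  have hconst : EqOn (fun r ↦ F (pol r z.arg)) (fun _ ↦ k) (Icc 0 1) :=
    EqOn.of_subset_closure (fun r hr ↦ hk r hr _) hray continuousOn_const Ioo_subset_Icc_self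
      (closure_Ioo zero_ne_one).superset
  rw [eq_pol_norm_arg z]
  exact hconst ⟨norm_nonneg z, mem_closedBall_zero_iff.1 hz⟩

section PolarCalculus

variable {F : ℂ → ℝ}

theorem contDiffOn_comp_pol (hF : ContDiffOn ℝ 2 F (Metric.closedBall 0 1)) :
    ContDiffOn ℝ (1 + 1) (fun q : ℝ × ℝ ↦ F (pol q.1 q.2)) (Ioo (-1) 1 ×ˢ univ) := by
  rw [one_add_one_eq_two]
  exact hF.comp contDiff_pol.contDiffOn fun q hq ↦ pol_mem_closedBall (Ioo_subset_Icc_self hq.1) _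

theorem contDiffOn_Fr (hF : ContDiffOn ℝ 2 F (Metric.closedBall 0 1)) :
    ContDiffOn ℝ (0 + 1) (fun q : ℝ × ℝ ↦ Fr F q.1 q.2) (Ioo (-1) 1 ×ˢ univ) := by
  rw [zero_add]
  exact contDiffOn_deriv_fst (contDiffOn_comp_pol hF) (isOpen_Ioo.prod isOpen_univ)

theorem continuousOn_Frr (hF : ContDiffOn ℝ 2 F (Metric.closedBall 0 1)) :
    ContinuousOn (fun q : ℝ × ℝ ↦ Frr F q.1 q.2) (Ioo (-1) 1 ×ˢ univ) :=
  (contDiffOn_deriv_fst (contDiffOn_Fr hF) (isOpen_Ioo.prod isOpen_univ)).continuousOn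

theorem contDiffOn_deriv_pol_snd (hF : ContDiffOn ℝ 2 F (Metric.closedBall 0 1)) :
    ContDiffOn ℝ (0 + 1) (fun q : ℝ × ℝ ↦ deriv (fun s ↦ F (pol q.1 s)) q.2)
      (Ioo (-1) 1 ×ˢ univ) := by
  rw [zero_add]
  exact contDiffOn_deriv_snd (contDiffOn_comp_pol hF) (isOpen_Ioo.prod isOpen_univ)

theorem continuousOn_Ftt (hF : ContDiffOn ℝ 2 F (Metric.closedBall 0 1)) :
    ContinuousOn (fun q : ℝ × ℝ ↦ Ftt F q.1 q.2) (Ioo (-1) 1 ×ˢ univ) :=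
  (contDiffOn_deriv_snd (contDiffOn_deriv_pol_snd hF) (isOpen_Ioo.prod isOpen_univ)).continuousOn

theorem hasDerivAt_comp_pol (hF : ContDiffOn ℝ 2 F (Metric.closedBall 0 1)) {r : ℝ}
    (hr : r ∈ Ioo (-1 : ℝ) 1) (θ : ℝ) : HasDerivAt (fun t ↦ F (pol t θ)) (Fr F r θ) r :=
  hasDerivAt_fst_of_contDiffOn (isOpen_Ioo.prod isOpen_univ) (contDiffOn_comp_pol hF)
    ⟨hr, mem_univ θ⟩

theorem hasDerivAt_Fr (hF : ContDiffOn ℝ 2 F (Metric.closedBall 0 1)) {r : ℝ}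
    (hr : r ∈ Ioo (-1 : ℝ) 1) (θ : ℝ) : HasDerivAt (fun t ↦ Fr F t θ) (Frr F r θ) r :=
  hasDerivAt_fst_of_contDiffOn (isOpen_Ioo.prod isOpen_univ) (contDiffOn_Fr hF) ⟨hr, mem_univ θ⟩

theorem hasDerivAt_integral_comp_pol (hF : ContDiffOn ℝ 2 F (Metric.closedBall 0 1)) {r : ℝ}
    (hr : r ∈ Ioo (-1 : ℝ) 1) :
    HasDerivAt (fun r ↦ ∫ θ in 0..2 * π, F (pol r θ)) (∫ θ in 0..2 * π, Fr F r θ) r :=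
  hasDerivAt_intervalIntegral_of_continuousOn (f := fun r θ ↦ F (pol r θ)) (f' := Fr F)
    isOpen_Ioo hr (contDiffOn_comp_pol hF).continuousOn (contDiffOn_Fr hF).continuousOn
    fun _ hs ↦ hasDerivAt_comp_pol hF hs

theorem hasDerivAt_comp_pol_snd (hF : ContDiffOn ℝ 2 F (Metric.closedBall 0 1)) {r : ℝ}
    (hr : r ∈ Ioo (-1 : ℝ) 1) (θ : ℝ) :
    HasDerivAt (fun s ↦ F (pol r s)) (deriv (fun s ↦ F (pol r s)) θ) θ :=
  hasDerivAt_snd_of_contDiffOn (isOpen_Ioo.prod isOpen_univ) (contDiffOn_comp_pol hF)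
    ⟨hr, mem_univ θ⟩

theorem hasDerivAt_deriv_pol_snd (hF : ContDiffOn ℝ 2 F (Metric.closedBall 0 1)) {r : ℝ}
    (hr : r ∈ Ioo (-1 : ℝ) 1) (θ : ℝ) :
    HasDerivAt (deriv fun s ↦ F (pol r s)) (Ftt F r θ) θ :=
  hasDerivAt_snd_of_contDiffOn (isOpen_Ioo.prod isOpen_univ) (contDiffOn_deriv_pol_snd hF)
    ⟨hr, mem_univ θ⟩

theorem deriv_pol_snd_periodic (F : ℂ → ℝ) (r : ℝ) :
    Function.Periodic (deriv fun s ↦ F (pol r s)) (2 * π) := fun θ ↦ by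
  have hperiodic : Function.Periodic (fun s ↦ F (pol r s)) (2 * π) := (pol_periodic r).comp F
  rw [← deriv_comp_add_const, hperiodic.funext]

theorem integral_Ftt_mul_eq (hF : ContDiffOn ℝ 2 F (Metric.closedBall 0 1)) {r : ℝ}
    (hr : r ∈ Ioo (-1 : ℝ) 1) {g g' g'' : ℝ → ℝ} (hg : ∀ θ, HasDerivAt g (g' θ) θ)
    (hg' : ∀ θ, HasDerivAt g' (g'' θ) θ) (hg'' : Continuous g'')
    (hgT : Function.Periodic g (2 * π)) (hg'T : Function.Periodic g' (2 * π)) :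
    ∫ θ in 0..2 * π, Ftt F r θ * g θ = ∫ θ in 0..2 * π, F (pol r θ) * g'' θ :=
  integral_mul_deriv2_comm_of_periodic (hasDerivAt_comp_pol_snd hF hr)
    (hasDerivAt_deriv_pol_snd hF hr) hg hg'
    (continuous_of_continuousOn_prod_univ (continuousOn_Ftt hF) hr) hg''
    ((pol_periodic r).comp F) (deriv_pol_snd_periodic F r) hgT hg'T

theorem integral_Ftt_mul_comm {F₁ F₂ : ℂ → ℝ} (hF₁ : ContDiffOn ℝ 2 F₁ (Metric.closedBall 0 1))
    (hF₂ : ContDiffOn ℝ 2 F₂ (Metric.closedBall 0 1)) {r : ℝ} (hr : r ∈ Ioo (-1 : ℝ) 1) :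
    ∫ θ in 0..2 * π, Ftt F₁ r θ * F₂ (pol r θ) = ∫ θ in 0..2 * π, F₁ (pol r θ) * Ftt F₂ r θ :=
  integral_Ftt_mul_eq hF₁ hr (hasDerivAt_comp_pol_snd hF₂ hr) (hasDerivAt_deriv_pol_snd hF₂ hr)
    (continuous_of_continuousOn_prod_univ (continuousOn_Ftt hF₂) hr) ((pol_periodic r).comp F₂)
    (deriv_pol_snd_periodic F₂ r)

end PolarCalculus

theorem integral_mul_Ftt_sub_eq_zero {F₁ F₂ : ℂ → ℝ}
    (hF₁ : ContDiffOn ℝ 2 F₁ (Metric.closedBall 0 1))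
    (hF₂ : ContDiffOn ℝ 2 F₂ (Metric.closedBall 0 1)) {r : ℝ} (hr : r ∈ Ioo (-1 : ℝ) 1) :
    ∫ θ in 0..2 * π, (F₁ (pol r θ) * Ftt F₂ r θ - Ftt F₁ r θ * F₂ (pol r θ)) = 0 := by
  rw [intervalIntegral.integral_sub, integral_Ftt_mul_comm hF₁ hF₂ hr, sub_self]
  · exact (continuous_of_continuousOn_prod_univ
      ((contDiffOn_comp_pol hF₁).continuousOn.mul (continuousOn_Ftt hF₂)) hr).intervalIntegrable _ _
  · exact (continuous_of_continuousOn_prod_univ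
      ((continuousOn_Ftt hF₁).mul (contDiffOn_comp_pol hF₂).continuousOn) hr).intervalIntegrable _ _

/-! ### Angular modes and Wronskians of solutions on the disc -/

/-- `F` is `C²` on the closed unit disc and satisfies `D F = lam F` on the punctured open disc,
where `D` is the operator with coefficients `a`, `b`, `c` as in `MixedTypeCoeffs`. -/
structure IsPolarSol (a b c : ℝ → ℝ) (lam : ℝ) (F : ℂ → ℝ) : Prop where
  contDiffOn : ContDiffOn ℝ 2 F (Metric.closedBall 0 1)
  pde : ∀ r ∈ Ioo (0 : ℝ) 1, ∀ θ,
    a r * (1 / r * Fr F r θ + 1 / r ^ 2 * Ftt F r θ) + c r * Frr F r θ + b r * Fr F r θ =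
      lam * F (pol r θ)

/-- The Fourier coefficient of `f r` against `θ ↦ cos (n θ + φ)`; the phases `φ = 0` and
`φ = -π / 2` give the cosine and the sine coefficients. -/
noncomputable def angularMode (n : ℤ) (φ : ℝ) (f : ℝ → ℝ → ℝ) (r : ℝ) : ℝ :=
  ∫ θ in 0..2 * π, f r θ * cos (n * θ + φ)

theorem cos_int_mul_add_periodic (n : ℤ) (φ : ℝ) :
    Function.Periodic (fun θ ↦ cos (n * θ + φ)) (2 * π) := fun θ ↦ by
  have hshift : n * (θ + 2 * π) + φ = n * θ + φ + n * (2 * π) := by ring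
  simp only [hshift, cos_add_int_mul_two_pi]

theorem hasDerivAt_cos_mul_add (n φ θ : ℝ) :
    HasDerivAt (fun θ ↦ cos (n * θ + φ)) (n * cos (n * θ + (φ + π / 2))) θ := by
  refine (((hasDerivAt_id θ).const_mul n).add_const φ).cos.congr_deriv ?_
  rw [← add_assoc, cos_add_pi_div_two, id]
  ring

theorem integral_cos_int_mul_add {n : ℤ} (hn : n ≠ 0) (φ : ℝ) :
    ∫ θ in 0..2 * π, cos (n * θ + φ) = 0 := by
  have hn' : (n : ℝ) ≠ 0 := Int.cast_ne_zero.2 hn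
  have hderiv (θ : ℝ) : HasDerivAt (fun θ ↦ (n : ℝ)⁻¹ * cos (n * θ + (φ - π / 2)))
      (cos (n * θ + φ)) θ :=
    ((hasDerivAt_cos_mul_add n (φ - π / 2) θ).const_mul _).congr_deriv
      (by rw [sub_add_cancel, inv_mul_cancel_left₀ hn'])
  rw [intervalIntegral.integral_eq_sub_of_hasDerivAt (fun θ _ ↦ hderiv θ)
    (Continuous.intervalIntegrable (by fun_prop) _ _), (cos_int_mul_add_periodic n _).eq, sub_self]

theorem hasDerivAt_angularMode (n : ℤ) (φ : ℝ) (f f' : ℝ → ℝ → ℝ)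
    (hf : ContinuousOn f.uncurry (Ioo (-1) 1 ×ˢ univ))
    (hf' : ContinuousOn f'.uncurry (Ioo (-1) 1 ×ˢ univ))
    (hderiv : ∀ r ∈ Ioo (-1 : ℝ) 1, ∀ θ, HasDerivAt (fun r ↦ f r θ) (f' r θ) r) {r : ℝ}
    (hr : r ∈ Ioo (-1 : ℝ) 1) : HasDerivAt (angularMode n φ f) (angularMode n φ f' r) r := by
  have hcos : Continuous fun q : ℝ × ℝ ↦ cos (n * q.2 + φ) := by fun_prop
  exact hasDerivAt_intervalIntegral_of_continuousOn (f := fun r θ ↦ f r θ * cos (n * θ + φ))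
    (f' := fun r θ ↦ f' r θ * cos (n * θ + φ)) isOpen_Ioo hr (hf.mul hcos.continuousOn)
    (hf'.mul hcos.continuousOn)
    fun y hy θ ↦ (hderiv y hy θ).mul_const _

theorem angularMode_Ftt {F : ℂ → ℝ} (hF : ContDiffOn ℝ 2 F (Metric.closedBall 0 1)) {r : ℝ}
    (hr : r ∈ Ioo (-1 : ℝ) 1) (n : ℤ) (φ : ℝ) :
    angularMode n φ (Ftt F) r = -n ^ 2 * angularMode n φ (fun r θ ↦ F (pol r θ)) r := by
  have hsecond (θ : ℝ) : HasDerivAt (fun θ ↦ (n : ℝ) * cos (n * θ + (φ + π / 2)))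
      (-n ^ 2 * cos (n * θ + φ)) θ :=
    ((hasDerivAt_cos_mul_add n (φ + π / 2) θ).const_mul _).congr_deriv (by
      rw [show n * θ + (φ + π / 2 + π / 2) = n * θ + φ + π by ring, cos_add_pi]
      ring)
  rw [angularMode, integral_Ftt_mul_eq hF hr (hasDerivAt_cos_mul_add n φ) hsecond (by fun_prop)
    (cos_int_mul_add_periodic n φ) fun θ ↦ congrArg _ (cos_int_mul_add_periodic n _ θ), angularMode,
    ← intervalIntegral.integral_const_mul]
  simp only [mul_left_comm]

theorem IsPolarSol.isRadialSol_angularMode {a b c : ℝ → ℝ} {lam : ℝ} {F : ℂ → ℝ}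
    (hF : IsPolarSol a b c lam F) (n : ℤ) (φ : ℝ) :
    IsRadialSol a b c lam n (angularMode n φ fun r θ ↦ F (pol r θ)) (angularMode n φ (Fr F))
      (angularMode n φ (Frr F)) where
  hasDerivAt r hr := hasDerivAt_angularMode n φ (fun r θ ↦ F (pol r θ)) (Fr F)
    (contDiffOn_comp_pol hF.contDiffOn).continuousOn
    (contDiffOn_Fr hF.contDiffOn).continuousOn (fun r hr ↦ hasDerivAt_comp_pol hF.contDiffOn hr) hr
  hasDerivAt_deriv r hr := hasDerivAt_angularMode n φ (Fr F) (Frr F)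
    (contDiffOn_Fr hF.contDiffOn).continuousOn
    (continuousOn_Frr hF.contDiffOn) (fun r hr ↦ hasDerivAt_Fr hF.contDiffOn hr) hr
  ode r hr := by
    have hr1 : r ∈ Ioo (-1 : ℝ) 1 := ⟨by linarith [hr.1], hr.2⟩
    have hint (f : ℝ → ℝ → ℝ) (hf : ContinuousOn f.uncurry (Ioo (-1) 1 ×ˢ univ)) (k : ℝ) :
        IntervalIntegrable (fun θ ↦ k * (f r θ * cos (n * θ + φ))) volume 0 (2 * π) :=
      (((continuous_of_continuousOn_prod_univ hf hr1).mul (by fun_prop)).const_mul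
        k).intervalIntegrable _ _
    have hFr := hint (Fr F) (contDiffOn_Fr hF.contDiffOn).continuousOn (a r / r + b r)
    have hFtt := hint (Ftt F) (continuousOn_Ftt hF.contDiffOn) (a r / r ^ 2)
    have hFrr := hint (Frr F) (continuousOn_Frr hF.contDiffOn) (c r)
    have hmode : lam * angularMode n φ (fun r θ ↦ F (pol r θ)) r =
        (a r / r + b r) * angularMode n φ (Fr F) r + a r / r ^ 2 * angularMode n φ (Ftt F) r +
          c r * angularMode n φ (Frr F) r := by
      simp only [angularMode, ← intervalIntegral.integral_const_mul]
      rw [← intervalIntegral.integral_add hFr hFtt,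
        ← intervalIntegral.integral_add (hFr.add hFtt) hFrr]
      congr 1 with θ
      linear_combination -cos (n * θ + φ) * hF.pde r hr θ
    rw [hmode, angularMode_Ftt hF.contDiffOn hr1]
    ring
  apply_zero hn := by
    simp only [angularMode, pol_zero, intervalIntegral.integral_const_mul,
      integral_cos_int_mul_add (Int.cast_ne_zero.1 hn), mul_zero]

theorem integral_mul_sq_of_eq_mul {R κ : ℝ} (hR : 0 ≤ R) (g : ℝ → ℝ) {f m : ℝ → ℝ}
    (hm : ∀ r ∈ Ioo 0 R, m r = κ * f r) :
    ∫ r in 0..R, g r * m r ^ 2 = κ ^ 2 * ∫ r in 0..R, g r * f r ^ 2 := by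
  rw [← intervalIntegral.integral_const_mul]
  refine intervalIntegral.integral_congr_Ioo_of_le hR fun r hr ↦ ?_
  simp only [hm r hr]
  ring

/-- The angular integral of the radial Wronskian of `F₁` and `F₂`. -/
noncomputable def angularWronskian (F₁ F₂ : ℂ → ℝ) (r : ℝ) : ℝ :=
  ∫ θ in 0..2 * π, (F₁ (pol r θ) * Fr F₂ r θ - F₂ (pol r θ) * Fr F₁ r θ)

theorem hasDerivAt_angularWronskian {F₁ F₂ : ℂ → ℝ}
    (hF₁ : ContDiffOn ℝ 2 F₁ (Metric.closedBall 0 1))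
    (hF₂ : ContDiffOn ℝ 2 F₂ (Metric.closedBall 0 1)) {r : ℝ} (hr : r ∈ Ioo (-1 : ℝ) 1) :
    HasDerivAt (angularWronskian F₁ F₂)
      (∫ θ in 0..2 * π, (F₁ (pol r θ) * Frr F₂ r θ - F₂ (pol r θ) * Frr F₁ r θ)) r := by
  have hcont₁ := (contDiffOn_comp_pol hF₁).continuousOn
  have hcont₂ := (contDiffOn_comp_pol hF₂).continuousOn
  refine hasDerivAt_intervalIntegral_of_continuousOn
    (f := fun r θ ↦ F₁ (pol r θ) * Fr F₂ r θ - F₂ (pol r θ) * Fr F₁ r θ)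
    (f' := fun r θ ↦ F₁ (pol r θ) * Frr F₂ r θ - F₂ (pol r θ) * Frr F₁ r θ) isOpen_Ioo hr
    ((hcont₁.mul (contDiffOn_Fr hF₂).continuousOn).sub
      (hcont₂.mul (contDiffOn_Fr hF₁).continuousOn))
    ((hcont₁.mul (continuousOn_Frr hF₂)).sub (hcont₂.mul (continuousOn_Frr hF₁)))
    fun s hs θ ↦ ?_
  exact (((hasDerivAt_comp_pol hF₁ hs θ).mul (hasDerivAt_Fr hF₂ hs θ)).sub
    ((hasDerivAt_comp_pol hF₂ hs θ).mul (hasDerivAt_Fr hF₁ hs θ))).congr_deriv (by ring)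

namespace IsPolarSol

variable {a b c p : ℝ → ℝ} {R lam lam₁ lam₂ : ℝ} {F F₁ F₂ : ℂ → ℝ}

theorem eigenvalue_eq_rayleigh_and_nonneg (hF : IsPolarSol a b c lam F)
    (h : MixedTypeCoeffs a b c R) (hp : IsIntegratingFactor a b c R p) {ν : ℕ} {v v' : ℝ → ℝ}
    (hFv : ∀ r ∈ Ioo (0 : ℝ) 1, ∀ θ, F (pol r θ) = v r * cos (ν * θ))
    (hv : ∀ r ∈ Ioo (0 : ℝ) 1, HasDerivAt v (v' r) r)
    (hne : ∃ z ∈ Metric.closedBall (0 : ℂ) 1, F z ≠ 0) :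
    lam = ((∫ r in 0..R, p r * v' r ^ 2) - ν ^ 2 * ∫ r in 0..R, slPotential p a c r * v r ^ 2) /
      (∫ r in 0..R, slWeight p c r * v r ^ 2) ∧ 0 ≤ lam := by
  have hsol := hF.isRadialSol_angularMode ν 0
  set m := angularMode ν 0 fun r θ ↦ F (pol r θ) with hm_def
  set κ := ∫ θ in 0..2 * π, cos (ν * θ) ^ 2 with hκ_def
  have hκ : 0 < κ := intervalIntegral.integral_pos two_pi_pos (by fun_prop)
    (fun θ _ ↦ sq_nonneg _) ⟨0, ⟨le_rfl, two_pi_pos.le⟩, by simp⟩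
  have hm (r : ℝ) (hr : r ∈ Ioo (0 : ℝ) 1) : m r = κ * v r := by
    rw [hκ_def, mul_comm, ← intervalIntegral.integral_const_mul]
    simp only [hm_def, angularMode, hFv r hr, Int.cast_natCast, add_zero, mul_assoc, sq]
  have hm' (r : ℝ) (hr : r ∈ Ioo (0 : ℝ) 1) : angularMode ν 0 (Fr F) r = κ * v' r :=
    (hsol.hasDerivAt r ⟨by linarith [hr.1], hr.2⟩).unique
      (((hv r hr).const_mul κ).congr_of_eventuallyEq
        (eventually_of_mem (Ioo_mem_nhds hr.1 hr.2) hm))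
  have hm_ne : ∃ r ∈ Ioo (0 : ℝ) 1, m r ≠ 0 := by
    contrapose! hne
    refine eq_const_of_eq_const_polar hF.contDiffOn.continuousOn fun r hr θ ↦ ?_
    have hvr : v r = 0 := (mul_eq_zero.1 ((hm r hr).symm.trans (hne r hr))).resolve_left hκ.ne'
    rw [hFv r hr, hvr, zero_mul]
  refine ⟨?_, hsol.eigenvalue_nonneg h hp hm_ne⟩
  have hsub {r : ℝ} (hr : r ∈ Ioo 0 R) : r ∈ Ioo (0 : ℝ) 1 := ⟨hr.1, hr.2.trans h.mem_Ioo.2⟩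
  have hscale (g : ℝ → ℝ) := integral_mul_sq_of_eq_mul h.mem_Ioo.1.le g fun r hr ↦ hm r (hsub hr)
  rw [hsol.eigenvalue_eq_rayleigh h hp hm_ne, hscale, hscale,
    integral_mul_sq_of_eq_mul h.mem_Ioo.1.le p fun r hr ↦ hm' r (hsub hr), mul_left_comm,
    ← mul_sub, mul_div_mul_left _ _ (pow_ne_zero 2 hκ.ne'), Int.cast_natCast]

theorem eq_apply_zero (hF : IsPolarSol a b c 0 F) (h : MixedTypeCoeffs a b c R)
    (hp : IsIntegratingFactor a b c R p) : ∀ z ∈ Metric.closedBall 0 1, F z = F 0 := by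
  refine eq_const_of_eq_const_polar hF.contDiffOn.continuousOn fun r hr θ ↦ ?_
  have hmode (n : ℤ) (φ : ℝ) := (hF.isRadialSol_angularMode n φ).eq_apply_zero h hp r hr
  have hmean := mul_two_pi_eq_integral_of_integral_mul_cos_eq_zero
    (continuous_of_continuousOn_prod_univ (contDiffOn_comp_pol hF.contDiffOn).continuousOn
      ⟨by linarith [hr.1], hr.2⟩)
    ((pol_periodic r).comp F)
    (fun n hn φ ↦ (hmode n φ).trans
      ((hF.isRadialSol_angularMode n φ).apply_zero (Int.cast_ne_zero.2 hn))) θ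
  have hzero : ∫ θ in 0..2 * π, F (pol r θ) = 2 * π * F 0 := by
    simpa [angularMode, pol_zero] using hmode 0 0
  exact mul_right_cancel₀ two_pi_pos.ne' (hmean.trans (hzero.trans (mul_comm _ _)))

theorem angularWronskian_ode (hF₁ : IsPolarSol a b c lam₁ F₁) (hF₂ : IsPolarSol a b c lam₂ F₂)
    {r : ℝ} (hr : r ∈ Ioo (0 : ℝ) 1) :
    c r * (∫ θ in 0..2 * π, (F₁ (pol r θ) * Frr F₂ r θ - F₂ (pol r θ) * Frr F₁ r θ)) +
        (a r / r + b r) * angularWronskian F₁ F₂ r =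
      (lam₂ - lam₁) * ∫ θ in 0..2 * π, F₁ (pol r θ) * F₂ (pol r θ) := by
  have hr' : r ∈ Ioo (-1 : ℝ) 1 := ⟨by linarith [hr.1], hr.2⟩
  have hcont₁ := (contDiffOn_comp_pol hF₁.contDiffOn).continuousOn
  have hcont₂ := (contDiffOn_comp_pol hF₂.contDiffOn).continuousOn
  have hint {G : ℝ × ℝ → ℝ} (hG : ContinuousOn G (Ioo (-1) 1 ×ˢ univ)) :
      IntervalIntegrable (fun θ ↦ G (r, θ)) volume 0 (2 * π) :=
    (continuous_of_continuousOn_prod_univ hG hr').intervalIntegrable _ _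
  have hFrr := (hint ((hcont₁.mul (continuousOn_Frr hF₂.contDiffOn)).sub
    (hcont₂.mul (continuousOn_Frr hF₁.contDiffOn)))).const_mul (c r)
  have hFr := (hint ((hcont₁.mul (contDiffOn_Fr hF₂.contDiffOn).continuousOn).sub
    (hcont₂.mul (contDiffOn_Fr hF₁.contDiffOn).continuousOn))).const_mul (a r / r + b r)
  have hFtt := (hint ((hcont₁.mul (continuousOn_Ftt hF₂.contDiffOn)).sub
    ((continuousOn_Ftt hF₁.contDiffOn).mul hcont₂))).const_mul (a r / r ^ 2)
  have hgreen := integral_mul_Ftt_sub_eq_zero hF₁.contDiffOn hF₂.contDiffOn hr'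
  have hpde : ∫ θ in 0..2 * π, (c r * (F₁ (pol r θ) * Frr F₂ r θ - F₂ (pol r θ) * Frr F₁ r θ) +
      (a r / r + b r) * (F₁ (pol r θ) * Fr F₂ r θ - F₂ (pol r θ) * Fr F₁ r θ) +
        a r / r ^ 2 * (F₁ (pol r θ) * Ftt F₂ r θ - Ftt F₁ r θ * F₂ (pol r θ))) =
      ∫ θ in 0..2 * π, (lam₂ - lam₁) * (F₁ (pol r θ) * F₂ (pol r θ)) := by
    refine intervalIntegral.integral_congr fun θ _ ↦ ?_
    linear_combination F₁ (pol r θ) * hF₂.pde r hr θ - F₂ (pol r θ) * hF₁.pde r hr θ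
  rw [intervalIntegral.integral_add (by exact hFrr.add hFr) (by exact hFtt),
    intervalIntegral.integral_add (by exact hFrr) (by exact hFr)] at hpde
  simpa only [angularWronskian, intervalIntegral.integral_const_mul, hgreen, mul_zero, add_zero]
    using hpde

theorem integral_slWeight_mul_eq_zero (hF₁ : IsPolarSol a b c lam₁ F₁)
    (hF₂ : IsPolarSol a b c lam₂ F₂) (hlam : lam₁ ≠ lam₂) (h : MixedTypeCoeffs a b c R)
    (hp : IsIntegratingFactor a b c R p) :
    ∫ r in 0..R, slWeight p c r * ∫ θ in 0..2 * π, F₁ (pol r θ) * F₂ (pol r θ) = 0 := by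
  have hmem {r : ℝ} (hr : r ∈ Icc 0 R) : r ∈ Ioo (-1 : ℝ) 1 :=
    ⟨by linarith [hr.1], hr.2.trans_lt h.mem_Ioo.2⟩
  have hderiv (r : ℝ) (hr : r ∈ Icc 0 R) :=
    hasDerivAt_angularWronskian hF₁.contDiffOn hF₂.contDiffOn (hmem hr)
  have hinner : ContinuousOn (fun r ↦ ∫ θ in 0..2 * π, F₁ (pol r θ) * F₂ (pol r θ)) (Icc 0 R) :=
    fun r hr ↦ (hasDerivAt_integral_comp_pol (hF₁.contDiffOn.mul hF₂.contDiffOn)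
      (hmem hr)).continuousAt.continuousWithinAt
  have hode : EqOn
      (fun r ↦ (lam₂ - lam₁) *
        (slWeight p c r * ∫ θ in 0..2 * π, F₁ (pol r θ) * F₂ (pol r θ)))
      (fun r ↦ slWeight p c r *
        (c r * (∫ θ in 0..2 * π, (F₁ (pol r θ) * Frr F₂ r θ - F₂ (pol r θ) * Frr F₁ r θ)) +
          (a r / r + b r) * angularWronskian F₁ F₂ r)) (Ioo 0 R) := fun r hr ↦ by
    simp only [angularWronskian_ode hF₁ hF₂ ⟨hr.1, hr.2.trans h.mem_Ioo.2⟩]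
    ring
  have hint := (hp.intervalIntegrable_slWeight_mul h hinner).const_mul (lam₂ - lam₁)
  have hzero := hp.integral_slWeight_mul_eq_zero h
    (fun r hr ↦ (hderiv r hr).continuousAt.continuousWithinAt)
    (fun r hr ↦ hderiv r (Ioo_subset_Icc_self hr))
    (hint.congr_uIoo (by rwa [uIoo_of_le h.mem_Ioo.1.le]))
  rw [← intervalIntegral.integral_congr_Ioo_of_le h.mem_Ioo.1.le hode,
    intervalIntegral.integral_const_mul] at hzero
  exact (mul_eq_zero.1 hzero).resolve_left (sub_ne_zero.2 hlam.symm)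

end IsPolarSol

/-! ### The coefficients of `D_ε` -/

/-- The function `σ₀` at scale `ε = 1`. As `√` and `arcsin` are constant for `1 ≤ x`, the closed
form covers both cases of the piecewise definition, here and for the other `σ`s. -/
noncomputable def sigma0 (x : ℝ) : ℝ := π / 2 + x * √(1 - x ^ 2) + arcsin x

/-- The function `σ₁₂` at scale `ε = 1`. -/
noncomputable def sigma12 (x : ℝ) : ℝ := -(2 / 3) * √(1 - x ^ 2) ^ 3

/-- The function `σ₂` at scale `ε = 1`. -/
noncomputable def sigma2 (x : ℝ) : ℝ :=
  π / 8 + 1 / 12 * (x * √(1 - x ^ 2) * (5 - 2 * x ^ 2) + 3 * arcsin x)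

/-- The function `σ₂₂` at scale `ε = 1`. -/
noncomputable def sigma22 (x : ℝ) : ℝ :=
  π / 8 + 1 / 4 * (x * √(1 - x ^ 2) * (2 * x ^ 2 - 1) + arcsin x)

/-- The function `σ₃` at scale `ε = 1`. -/
noncomputable def sigma3 (x : ℝ) : ℝ := -(2 / 15) * √(1 - x ^ 2) ^ 5

/-- The function `σ₃₂` at scale `ε = 1`. -/
noncomputable def sigma32 (x : ℝ) : ℝ := -(2 / 15) * (2 + 3 * x ^ 2) * √(1 - x ^ 2) ^ 3

/-- Twice the numerator of `φ₁₁` at scale `ε = 1`. -/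
noncomputable def phiNum11 (x : ℝ) : ℝ := sigma22 x * sigma2 x - sigma3 x * sigma12 x

/-- Twice the numerator of `φ₂₂` at scale `ε = 1`. -/
noncomputable def phiNum22 (x : ℝ) : ℝ := sigma22 x ^ 2 - sigma32 x * sigma12 x

/-- The common denominator of `φ₁₁`, `φ₂₂` and `φ₂` at scale `ε = 1`. -/
noncomputable def phiDen (x : ℝ) : ℝ := sigma12 x ^ 2 - sigma22 x * sigma0 x

section Rescaling

theorem sqrt_one_sub_sq_of_one_le {x : ℝ} (hx : 1 ≤ x) : √(1 - x ^ 2) = 0 :=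
  sqrt_eq_zero_of_nonpos (sub_nonpos.2 (one_le_pow₀ hx))

theorem one_sub_sq_nonneg {x : ℝ} (hx : x ∈ Icc (0 : ℝ) 1) : 0 ≤ 1 - x ^ 2 :=
  sub_nonneg.2 (pow_le_one₀ hx.1 hx.2)

theorem rpow_three_div_two {y : ℝ} (hy : 0 ≤ y) : y ^ ((3 : ℝ) / 2) = √y ^ 3 := by
  rw [rpow_div_two_eq_sqrt 3 hy, rpow_ofNat]

theorem rpow_five_div_two {y : ℝ} (hy : 0 ≤ y) : y ^ ((5 : ℝ) / 2) = √y ^ 5 := by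
  rw [rpow_div_two_eq_sqrt 5 hy, rpow_ofNat]

theorem ite_mem_eq_rescale {ε t z : ℝ} {f g : ℝ → ℝ} (hε : 0 < ε) (ht : 0 ≤ t)
    (hfg : ∀ x ∈ Icc (0 : ℝ) 1, f x = g x) (hg : ∀ x, 1 ≤ x → g x = z) :
    (if 0 ≤ t ∧ t ≤ ε then f (t / ε) else z) = g (t / ε) := by
  split_ifs with h
  · exact hfg _ ⟨div_nonneg ht hε.le, (div_le_one hε).2 h.2⟩
  · exact (hg _ ((one_le_div hε).2 (not_le.1 fun hle ↦ h ⟨ht, hle⟩).le)).symm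

variable {ε t : ℝ} (hε : 0 < ε) (ht : 0 ≤ t)
include hε ht

theorem s0_eq_sigma0 : s0 ε t = sigma0 (t / ε) :=
  ite_mem_eq_rescale (f := sigma0) hε ht (fun _ _ ↦ rfl) fun x hx ↦ by
    rw [sigma0, sqrt_one_sub_sq_of_one_le hx, arcsin_of_one_le hx]
    ring

theorem s12_eq_sigma12 : s12 ε t = sigma12 (t / ε) :=
  ite_mem_eq_rescale (f := fun x ↦ -(2 / 3) * (1 - x ^ 2) ^ ((3 : ℝ) / 2)) hε ht
    (fun x hx ↦ by rw [rpow_three_div_two (one_sub_sq_nonneg hx), sigma12]) fun x hx ↦ by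
    rw [sigma12, sqrt_one_sub_sq_of_one_le hx]
    ring

theorem s2_eq_sigma2 : s2 ε t = sigma2 (t / ε) :=
  ite_mem_eq_rescale (f := sigma2) hε ht (fun _ _ ↦ rfl) fun x hx ↦ by
    rw [sigma2, sqrt_one_sub_sq_of_one_le hx, arcsin_of_one_le hx]
    ring

theorem s22_eq_sigma22 : s22 ε t = sigma22 (t / ε) :=
  ite_mem_eq_rescale (f := sigma22) hε ht (fun _ _ ↦ rfl) fun x hx ↦ by
    rw [sigma22, sqrt_one_sub_sq_of_one_le hx, arcsin_of_one_le hx]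
    ring

theorem s3_eq_sigma3 : s3 ε t = sigma3 (t / ε) :=
  ite_mem_eq_rescale (f := fun x ↦ -(2 / 15) * (1 - x ^ 2) ^ ((5 : ℝ) / 2)) hε ht
    (fun x hx ↦ by rw [rpow_five_div_two (one_sub_sq_nonneg hx), sigma3]) fun x hx ↦ by
    rw [sigma3, sqrt_one_sub_sq_of_one_le hx]
    ring

theorem s32_eq_sigma32 : s32 ε t = sigma32 (t / ε) :=
  ite_mem_eq_rescale (f := fun x ↦ -(2 / 15) * (2 + 3 * x ^ 2) * (1 - x ^ 2) ^ ((3 : ℝ) / 2)) hε ht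
    (fun x hx ↦ by rw [rpow_three_div_two (one_sub_sq_nonneg hx), sigma32]) fun x hx ↦ by
    rw [sigma32, sqrt_one_sub_sq_of_one_le hx]
    ring

theorem phi11_eq_div : phi11 ε t = 1 / 2 * phiNum11 (t / ε) / phiDen (t / ε) := by
  rw [phi11, s0_eq_sigma0 hε ht, s12_eq_sigma12 hε ht, s2_eq_sigma2 hε ht, s22_eq_sigma22 hε ht,
    s3_eq_sigma3 hε ht, phiNum11, phiDen]

theorem phi22_eq_div : phi22 ε t = 1 / 2 * phiNum22 (t / ε) / phiDen (t / ε) := by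
  rw [phi22, s0_eq_sigma0 hε ht, s12_eq_sigma12 hε ht, s22_eq_sigma22 hε ht, s32_eq_sigma32 hε ht,
    phiNum22, phiDen]

theorem phi2d_eq_div : phi2d ε t = sigma12 (t / ε) / phiDen (t / ε) := by
  rw [phi2d, s0_eq_sigma0 hε ht, s12_eq_sigma12 hε ht, s22_eq_sigma22 hε ht, phiDen]

end Rescaling

section UnitScale

variable {x : ℝ}

theorem sqrt_one_sub_sq_le_one (x : ℝ) : √(1 - x ^ 2) ≤ 1 :=
  sqrt_le_one.2 (sub_le_self _ (sq_nonneg x))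

theorem mul_sqrt_one_sub_sq_le_arcsin (hx : 0 ≤ x) : x * √(1 - x ^ 2) ≤ arcsin x := by
  rcases le_total x 1 with hx1 | hx1
  · calc x * √(1 - x ^ 2) ≤ x := mul_le_of_le_one_right hx (sqrt_one_sub_sq_le_one x)
      _ = sin (arcsin x) := (sin_arcsin (by linarith) hx1).symm
      _ ≤ arcsin x := sin_le (arcsin_nonneg.2 hx)
  · rw [sqrt_one_sub_sq_of_one_le hx1, mul_zero]
    exact arcsin_nonneg.2 hx

theorem pi_div_two_le_sigma0 (hx : 0 ≤ x) : π / 2 ≤ sigma0 x := by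
  have := arcsin_nonneg.2 hx
  have : 0 ≤ x * √(1 - x ^ 2) := by positivity
  rw [sigma0]
  linarith

theorem pi_div_eight_le_sigma22 (hx : 0 ≤ x) : π / 8 ≤ sigma22 x := by
  have hu : 0 ≤ x * √(1 - x ^ 2) := by positivity
  rw [sigma22]
  linarith [mul_sqrt_one_sub_sq_le_arcsin hx, mul_nonneg hu (sq_nonneg x)]

theorem pi_div_eight_le_sigma2 (hx : 0 ≤ x) : π / 8 ≤ sigma2 x := by
  have harcsin := arcsin_nonneg.2 hx
  have hu : 0 ≤ √(1 - x ^ 2) * (5 - 2 * x ^ 2) := by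
    rcases le_total x 1 with hx1 | hx1
    · exact mul_nonneg (sqrt_nonneg _) (by linarith [one_sub_sq_nonneg ⟨hx, hx1⟩])
    · rw [sqrt_one_sub_sq_of_one_le hx1, zero_mul]
  rw [sigma2]
  linarith [mul_nonneg hx hu]

theorem sigma12_nonpos (x : ℝ) : sigma12 x ≤ 0 :=
  mul_nonpos_of_nonpos_of_nonneg (by norm_num) (by positivity)

theorem phiDen_neg (hx : 0 ≤ x) : phiDen x < 0 := by
  have hprod : π / 8 * (π / 2) ≤ sigma22 x * sigma0 x :=
    mul_le_mul (pi_div_eight_le_sigma22 hx) (pi_div_two_le_sigma0 hx) (by positivity)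
      (by linarith [pi_div_eight_le_sigma22 hx, pi_pos])
  have hu : √(1 - x ^ 2) ^ 6 ≤ 1 := pow_le_one₀ (sqrt_nonneg _) (sqrt_one_sub_sq_le_one x)
  rw [phiDen, sigma12]
  nlinarith [pi_gt_three]

theorem phiNum11_pos (hx : 0 ≤ x) : 0 < phiNum11 x := by
  have hprod : π / 8 * (π / 8) ≤ sigma22 x * sigma2 x :=
    mul_le_mul (pi_div_eight_le_sigma22 hx) (pi_div_eight_le_sigma2 hx) (by positivity)
      (by linarith [pi_div_eight_le_sigma22 hx, pi_pos])
  have hu : √(1 - x ^ 2) ^ 8 ≤ 1 := pow_le_one₀ (sqrt_nonneg _) (sqrt_one_sub_sq_le_one x)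
  rw [phiNum11, sigma3, sigma12]
  nlinarith [pi_gt_three]

theorem continuous_phiDen : Continuous phiDen := by
  unfold phiDen sigma12 sigma22 sigma0
  fun_prop

theorem continuous_phiNum11 : Continuous phiNum11 := by
  unfold phiNum11 sigma22 sigma2 sigma3 sigma12
  fun_prop

theorem continuous_phiNum22 : Continuous phiNum22 := by
  unfold phiNum22 sigma22 sigma32 sigma12
  fun_prop

theorem continuous_sigma12 : Continuous sigma12 := by
  unfold sigma12
  fun_prop

theorem hasDerivAt_sqrt_one_sub_sq (hx : x ∈ Ioo (0 : ℝ) 1) :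
    HasDerivAt (fun x ↦ √(1 - x ^ 2)) (-x / √(1 - x ^ 2)) x := by
  have hu : 0 < 1 - x ^ 2 := sub_pos.2 (pow_lt_one₀ hx.1.le hx.2 two_ne_zero)
  refine (((hasDerivAt_pow 2 x).const_sub 1).sqrt hu.ne').congr_deriv ?_
  rw [pow_one, Nat.cast_ofNat, mul_comm (2 : ℝ), mul_comm 2, ← neg_mul,
    mul_div_mul_right _ _ two_ne_zero]

theorem differentiableAt_phiDen (hx : x ∈ Ioo (0 : ℝ) 1) : DifferentiableAt ℝ phiDen x := by
  have := (hasDerivAt_sqrt_one_sub_sq hx).differentiableAt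
  have : DifferentiableAt ℝ arcsin x :=
    differentiableAt_arcsin.2 ⟨by linarith [hx.1], hx.2.ne⟩
  unfold phiDen sigma12 sigma22 sigma0
  fun_prop

theorem hasDerivAt_sigma22 (hx : x ∈ Ioo (0 : ℝ) 1) :
    HasDerivAt sigma22 (2 * x ^ 2 * √(1 - x ^ 2)) x := by
  have hu : 0 < 1 - x ^ 2 := sub_pos.2 (pow_lt_one₀ hx.1.le hx.2 two_ne_zero)
  have := sqrt_pos.2 hu
  refine (((((hasDerivAt_id x).mul (hasDerivAt_sqrt_one_sub_sq hx)).mul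
    (((hasDerivAt_pow 2 x).const_mul 2).sub_const 1)).add
      (hasDerivAt_arcsin (by linarith [hx.1]) hx.2.ne)).const_mul (1 / 4)).const_add (π / 8)
    |>.congr_deriv ?_
  simp only [Pi.mul_apply, id]
  field_simp
  simp only [sq_sqrt hu.le]
  ring

theorem hasDerivAt_phiNum22 (hx : x ∈ Ioo (0 : ℝ) 1) :
    HasDerivAt phiNum22 (4 * sigma22 x * x ^ 2 * √(1 - x ^ 2) +
      8 / 15 * x * (1 + 4 * x ^ 2) * √(1 - x ^ 2) ^ 4) x := by
  have hu : 0 < 1 - x ^ 2 := sub_pos.2 (pow_lt_one₀ hx.1.le hx.2 two_ne_zero)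
  have := (sqrt_pos.2 hu).ne'
  have hcube : HasDerivAt (fun x ↦ √(1 - x ^ 2) ^ 3) (-3 * x * √(1 - x ^ 2)) x :=
    ((hasDerivAt_sqrt_one_sub_sq hx).pow 3).congr_deriv (by push_cast; field_simp)
  refine (((hasDerivAt_sigma22 hx).pow 2).sub ((((((hasDerivAt_pow 2 x).const_mul 3).const_add
    2).const_mul (-(2 / 15))).mul hcube).mul (hcube.const_mul (-(2 / 3))))).congr_deriv ?_
  simp only [Pi.mul_apply, Nat.cast_ofNat, Nat.add_one_sub_one, pow_one]
  linear_combination -(8 / 15) * x * √(1 - x ^ 2) ^ 4 * sq_sqrt hu.le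

theorem deriv_phiNum22_pos (hx : x ∈ Ioo (0 : ℝ) 1) : 0 < deriv phiNum22 x := by
  have hx0 := hx.1
  have hsqrt : 0 < √(1 - x ^ 2) :=
    sqrt_pos.2 (sub_pos.2 (pow_lt_one₀ hx.1.le hx.2 two_ne_zero))
  have hsigma : 0 < sigma22 x := by linarith [pi_div_eight_le_sigma22 hx.1.le, pi_pos]
  rw [(hasDerivAt_phiNum22 hx).deriv]
  positivity

theorem strictMonoOn_phiNum22 : StrictMonoOn phiNum22 (Icc 0 1) :=
  strictMonoOn_of_deriv_pos (convex_Icc 0 1) continuous_phiNum22.continuousOn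
    fun x hx ↦ deriv_phiNum22_pos (by rwa [interior_Icc] at hx)

theorem phiNum22_eq_of_one_le (hx : 1 ≤ x) : phiNum22 x = phiNum22 1 := by
  simp only [phiNum22, sigma22, sigma32, sqrt_one_sub_sq_of_one_le hx,
    sqrt_one_sub_sq_of_one_le le_rfl, arcsin_of_one_le hx, arcsin_one]
  ring

theorem phiNum22_pos_of_lt {x₀ : ℝ} (hx₀ : x₀ ∈ Ioo (0 : ℝ) 1) (hzero : phiNum22 x₀ = 0)
    (hx : x₀ < x) : 0 < phiNum22 x := by
  have hmem := Ioo_subset_Icc_self hx₀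
  rw [← hzero]
  rcases le_total x 1 with hx1 | hx1
  · exact strictMonoOn_phiNum22 hmem ⟨(hx₀.1.trans hx).le, hx1⟩ hx
  · rw [phiNum22_eq_of_one_le hx1]
    exact strictMonoOn_phiNum22 hmem (right_mem_Icc.2 zero_le_one) hx₀.2

theorem phiNum22_one_third_pos : 0 < phiNum22 (1 / 3) := by
  have hsigma := pi_div_eight_le_sigma22 (x := 1 / 3) (by norm_num)
  have hsq : √(1 - (1 / 3) ^ 2) ^ 2 = 8 / 9 := by rw [sq_sqrt (by norm_num)]; norm_num
  have hprod : sigma32 (1 / 3) * sigma12 (1 / 3) = 28 / 135 * (√(1 - (1 / 3) ^ 2) ^ 2) ^ 3 := by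
    rw [sigma32, sigma12]
    ring
  rw [phiNum22, hprod, hsq]
  nlinarith [pi_gt_d2]

theorem lt_one_third_of_phiNum22_eq_zero (hx : x ∈ Ioo (0 : ℝ) 1) (hzero : phiNum22 x = 0) :
    x < 1 / 3 := by
  refine (strictMonoOn_phiNum22.lt_iff_lt (Ioo_subset_Icc_self hx) (by norm_num)).1 ?_
  exact hzero.trans_lt phiNum22_one_third_pos

end UnitScale

-- Where `φ₂₂(1 - r) > 0` one has `1 - r < r₀ < ε / 3`, so the factor `r` of `φ₂` is at least
-- `2 / 3`.
theorem half_phiNum11_add_two_thirds_sigma12_neg {x : ℝ} (hx : x ∈ Icc (0 : ℝ) (1 / 3)) :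
    1 / 2 * phiNum11 x + 2 / 3 * sigma12 x < 0 := by
  have hx0 := hx.1
  have hxx : x ^ 2 ≤ 1 / 9 := (pow_le_pow_left₀ hx0 hx.2 2).trans_eq (by norm_num)
  have hu0 := sqrt_nonneg (1 - x ^ 2)
  have hu1 := sqrt_one_sub_sq_le_one x
  have hsigma12 : sigma12 x ≤ -(1 / 2) := by
    have hpow : √(1 - x ^ 2) ^ 4 ≤ √(1 - x ^ 2) ^ 3 := pow_le_pow_of_le_one hu0 hu1 (by norm_num)
    have hsq := sq_sqrt (show 0 ≤ 1 - x ^ 2 by linarith)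
    rw [sigma12]
    nlinarith
  have harcsin : arcsin x ≤ π / 6 :=
    (arcsin_le_iff_le_sin' ⟨by linarith [pi_pos], by linarith [pi_pos]⟩).2
      (by linarith [hx.2, sin_pi_div_six])
  have hxu : x * √(1 - x ^ 2) ≤ 1 / 3 := (mul_le_of_le_one_right hx0 hu1).trans hx.2
  have hxu0 : 0 ≤ x * √(1 - x ^ 2) := by positivity
  have hsigma22 : sigma22 x ≤ π / 6 := by
    have := mul_nonpos_of_nonneg_of_nonpos hxu0 (show 2 * x ^ 2 - 1 ≤ 0 by linarith)
    rw [sigma22]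
    linarith
  have hsigma2 : sigma2 x ≤ π / 6 + 5 / 36 := by
    have := mul_nonneg hxu0 (sq_nonneg x)
    rw [sigma2]
    linarith
  have hprod : sigma22 x * sigma2 x ≤ π / 6 * (π / 6 + 5 / 36) :=
    mul_le_mul hsigma22 hsigma2 (by linarith [pi_div_eight_le_sigma2 hx0, pi_pos]) (by positivity)
  have hsigma3 : 0 ≤ sigma3 x * sigma12 x :=
    mul_nonneg_of_nonpos_of_nonpos
      (mul_nonpos_of_nonpos_of_nonneg (by norm_num) (by positivity)) (sigma12_nonpos x)
  rw [phiNum11]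
  nlinarith [pi_lt_d2, pi_pos]

section DiscOperator

variable {ε r0 t : ℝ}

theorem phi11_neg (hε : 0 < ε) (ht : 0 ≤ t) : phi11 ε t < 0 := by
  have hx : 0 ≤ t / ε := by positivity
  rw [phi11_eq_div hε ht]
  exact div_neg_of_pos_of_neg (by linarith [phiNum11_pos hx]) (phiDen_neg hx)

theorem continuousOn_div_phiDen_rescale {f : ℝ → ℝ} (hf : Continuous f) (hε : 0 < ε) :
    ContinuousOn (fun t ↦ f (t / ε) / phiDen (t / ε)) (Ici 0) :=
  (hf.comp (continuous_id.div_const ε)).continuousOn.div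
    (continuous_phiDen.comp (continuous_id.div_const ε)).continuousOn
    fun _ ht ↦ (phiDen_neg (div_nonneg ht hε.le)).ne

theorem continuousOn_phi11 (hε : 0 < ε) : ContinuousOn (phi11 ε) (Ici 0) :=
  (continuousOn_div_phiDen_rescale (continuous_phiNum11.const_mul (1 / 2)) hε).congr
    fun _ ht ↦ phi11_eq_div hε ht

theorem continuousOn_phi22 (hε : 0 < ε) : ContinuousOn (phi22 ε) (Ici 0) :=
  (continuousOn_div_phiDen_rescale (continuous_phiNum22.const_mul (1 / 2)) hε).congr
    fun _ ht ↦ phi22_eq_div hε ht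

theorem continuousOn_phi2d (hε : 0 < ε) : ContinuousOn (phi2d ε) (Ici 0) :=
  (continuousOn_div_phiDen_rescale continuous_sigma12 hε).congr fun _ ht ↦ phi2d_eq_div hε ht

theorem div_mem_Ioo (hr0 : r0 ∈ Ioo 0 ε) : r0 / ε ∈ Ioo (0 : ℝ) 1 :=
  have hε := hr0.1.trans hr0.2
  ⟨div_pos hr0.1 hε, (div_lt_one hε).2 hr0.2⟩

theorem phiNum22_eq_zero (hr0 : r0 ∈ Ioo 0 ε) (hzero : phi22 ε r0 = 0) :
    phiNum22 (r0 / ε) = 0 := by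
  rw [phi22_eq_div (hr0.1.trans hr0.2) hr0.1.le] at hzero
  simpa [(phiDen_neg (div_mem_Ioo hr0).1.le).ne] using hzero

theorem phi22_neg_of_lt (hr0 : r0 ∈ Ioo 0 ε) (hzero : phi22 ε r0 = 0) (ht : r0 < t) :
    phi22 ε t < 0 := by
  have hε := hr0.1.trans hr0.2
  have ht0 := (hr0.1.trans ht).le
  rw [phi22_eq_div hε ht0]
  have hnum := phiNum22_pos_of_lt (div_mem_Ioo hr0) (phiNum22_eq_zero hr0 hzero)
    (div_lt_div_of_pos_right ht hε)
  exact div_neg_of_pos_of_neg (by linarith) (phiDen_neg (by positivity))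

theorem phi22_pos_of_lt (hr0 : r0 ∈ Ioo 0 ε) (hzero : phi22 ε r0 = 0) (ht0 : 0 ≤ t) (ht : t < r0) :
    0 < phi22 ε t := by
  have hε := hr0.1.trans hr0.2
  have hx : 0 ≤ t / ε := by positivity
  have hlt : t / ε < r0 / ε := div_lt_div_of_pos_right ht hε
  have hnum : phiNum22 (t / ε) < 0 := by
    rw [← phiNum22_eq_zero hr0 hzero]
    exact strictMonoOn_phiNum22 ⟨hx, (hlt.trans (div_mem_Ioo hr0).2).le⟩
      (Ioo_subset_Icc_self (div_mem_Ioo hr0)) hlt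
  rw [phi22_eq_div hε ht0]
  exact div_pos_of_neg_of_neg (by linarith) (phiDen_neg hx)

theorem exists_neg_hasDerivAt_phi22 (hr0 : r0 ∈ Ioo 0 ε) (hzero : phi22 ε r0 = 0) :
    ∃ d < 0, HasDerivAt (phi22 ε) d r0 := by
  have hε := hr0.1.trans hr0.2
  have hx := div_mem_Ioo hr0
  have hden := phiDen_neg hx.1.le
  have hden_ne := hden.ne
  have hscale : HasDerivAt (fun t ↦ t / ε) (1 / ε) r0 := (hasDerivAt_id r0).div_const ε
  have hrescale {f : ℝ → ℝ} (hf : DifferentiableAt ℝ f (r0 / ε)) :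
      HasDerivAt (fun t ↦ f (t / ε)) (deriv f (r0 / ε) * (1 / ε)) r0 :=
    hf.hasDerivAt.comp r0 hscale
  have hquot := ((hrescale (hasDerivAt_phiNum22 hx).differentiableAt).const_mul (1 / 2)).div
    (hrescale (differentiableAt_phiDen hx)) hden_ne
  refine ⟨_, ?_, hquot.congr_of_eventuallyEq
    (eventually_of_mem (Ioi_mem_nhds hr0.1) fun t ht ↦ phi22_eq_div hε (le_of_lt ht))⟩
  have hderiv := deriv_phiNum22_pos hx
  simp only [phiNum22_eq_zero hr0 hzero, mul_zero, zero_mul, sub_zero]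
  exact div_neg_of_neg_of_pos (mul_neg_of_pos_of_neg (by positivity) hden) (by positivity)

theorem dslope_phi22_pos (hr0 : r0 ∈ Ioo 0 ε) (hzero : phi22 ε r0 = 0) {r : ℝ} (hr : r ≤ 1) :
    0 < dslope (fun r ↦ phi22 ε (1 - r)) (1 - r0) r := by
  rcases eq_or_ne r (1 - r0) with rfl | hne
  · obtain ⟨d, hd, hderiv⟩ := exists_neg_hasDerivAt_phi22 hr0 hzero
    have hreflect : HasDerivAt (fun r ↦ phi22 ε (1 - r)) (-d) (1 - r0) :=
      HasDerivAt.comp_const_sub 1 (1 - r0) (by rwa [sub_sub_cancel])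
    rw [dslope_same, hreflect.deriv]
    exact neg_pos.2 hd
  rw [dslope_of_ne _ hne, slope_def_field, sub_sub_cancel, hzero, sub_zero]
  rcases hne.lt_or_gt with hlt | hgt
  · exact div_pos_of_neg_of_neg (phi22_neg_of_lt hr0 hzero (by linarith)) (by linarith)
  · exact div_pos (phi22_pos_of_lt hr0 hzero (by linarith) (by linarith)) (by linarith)

theorem phi11_add_mul_phi2d_pos (hε1 : ε < 1) (hr0 : r0 ∈ Ioo 0 ε) (hzero : phi22 ε r0 = 0)
    (ht0 : 0 ≤ t) (ht : t ≤ r0) : 0 < phi11 ε t + (1 - t) * phi2d ε t := by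
  have hε := hr0.1.trans hr0.2
  have hx : 0 ≤ t / ε := by positivity
  have hx0 := lt_one_third_of_phiNum22_eq_zero (div_mem_Ioo hr0) (phiNum22_eq_zero hr0 hzero)
  have hxle : t / ε ≤ 1 / 3 := (div_le_div_of_nonneg_right ht hε.le).trans hx0.le
  have hr_large : 2 / 3 ≤ 1 - t := by linarith [(div_lt_iff₀ hε).1 hx0]
  rw [phi11_eq_div hε ht0, phi2d_eq_div hε ht0, ← mul_div_assoc, ← add_div]
  refine div_pos_of_neg_of_neg ?_ (phiDen_neg hx)
  linarith [half_phiNum11_add_two_thirds_sigma12_neg ⟨hx, hxle⟩,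
    mul_le_mul_of_nonpos_right hr_large (sigma12_nonpos (t / ε))]

theorem mixedTypeCoeffs_phi (hε1 : ε < 1) (hr0 : r0 ∈ Ioo 0 ε) (hzero : phi22 ε r0 = 0) :
    MixedTypeCoeffs (fun r ↦ phi11 ε (1 - r)) (fun r ↦ phi2d ε (1 - r))
      (fun r ↦ phi22 ε (1 - r)) (1 - r0) := by
  have hε := hr0.1.trans hr0.2
  have hreflect {f : ℝ → ℝ} (hf : ContinuousOn f (Ici 0)) :
      ContinuousOn (fun r ↦ f (1 - r)) (Icc 0 1) :=
    hf.comp (by fun_prop) fun r hr ↦ sub_nonneg.2 hr.2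
  obtain ⟨d, -, hderiv⟩ := exists_neg_hasDerivAt_phi22 hr0 hzero
  exact {
    mem_Ioo := ⟨by linarith [hr0.2], by linarith [hr0.1]⟩
    continuousOn_a := hreflect (continuousOn_phi11 hε)
    continuousOn_b := hreflect (continuousOn_phi2d hε)
    continuousOn_c := hreflect (continuousOn_phi22 hε)
    c_eq_zero := by rwa [sub_sub_cancel]
    differentiableAt_c :=
      (HasDerivAt.comp_const_sub 1 (1 - r0) (by rwa [sub_sub_cancel])).differentiableAt
    dslope_c_pos := fun _ hr ↦ dslope_phi22_pos hr0 hzero hr.2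
    a_neg := fun _ hr ↦ phi11_neg hε (by linarith [hr.2, hr0.1])
    first_order_pos := fun r hr ↦ by
      simpa only [sub_sub_cancel] using
        phi11_add_mul_phi2d_pos hε1 hr0 hzero (sub_nonneg.2 hr.2) (sub_le_comm.1 hr.1) }

theorem isIntegratingFactor_pd (hε1 : ε < 1) (hr0 : r0 ∈ Ioo 0 ε) (hzero : phi22 ε r0 = 0) :
    IsIntegratingFactor (fun r ↦ phi11 ε (1 - r)) (fun r ↦ phi2d ε (1 - r))
      (fun r ↦ phi22 ε (1 - r)) (1 - r0) (pd ε r0) := by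
  have h := mixedTypeCoeffs_phi hε1 hr0 hzero
  set L : ℝ → ℝ := fun s ↦ (phi11 ε (1 - s) + s * phi2d ε (1 - s)) / (s * phi22 ε (1 - s))
  have hcont : ContinuousOn L (Ioo 0 (1 - r0)) :=
    (h.continuousOn_first_order.mono (Ioo_subset_Icc_self.trans h.Icc_subset)).div
      (continuousOn_id.mul
        (h.continuousOn_c.mono (Ioo_subset_Icc_self.trans h.Icc_subset)))
      fun s hs ↦ mul_ne_zero hs.1.ne' (h.c_neg (Ioo_subset_Ico_self hs)).ne
  have hpd {r : ℝ} (hr : r < 1 - r0) :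
      pd ε r0 r = 1 / 8 * (1 - ε) * exp (∫ s in (1 - ε)..r, L s) := by
    rw [pd, sign_of_pos (sub_pos.2 hr), mul_one]
  have hpos {r : ℝ} (hr : r ∈ Ioo 0 (1 - r0)) : 0 < pd ε r0 r := by
    have := sub_pos.2 hε1
    rw [hpd hr.2]
    positivity
  refine ⟨fun r hr ↦ hpos hr, fun r hr ↦ ?_⟩
  have hmem : 1 - ε ∈ Ioo 0 (1 - r0) := ⟨sub_pos.2 hε1, by linarith [hr0.2]⟩
  refine (((hasDerivAt_integral_of_continuousOn_Ioo hcont hmem hr).exp.const_mul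
    (1 / 8 * (1 - ε))).congr_of_eventuallyEq
      (eventually_of_mem (Iio_mem_nhds hr.2) fun _ ht ↦ hpd ht)).congr_deriv ?_
  rw [hpd hr.2]
  exact (mul_assoc _ _ _).symm

theorem IsDiscSol.isPolarSol {lam : ℝ} {F : ℂ → ℝ} (hF : IsDiscSol ε lam F) :
    IsPolarSol (fun r ↦ phi11 ε (1 - r)) (fun r ↦ phi2d ε (1 - r)) (fun r ↦ phi22 ε (1 - r))
      lam F :=
  ⟨hF.1, fun r hr ↦ hF.2 r (Ioo_subset_Ioc_self hr)⟩

theorem isDiscSol_const (ε k : ℝ) : IsDiscSol ε 0 fun _ ↦ k :=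
  ⟨contDiffOn_const, fun r _ θ ↦ by simp [Fr, Frr, Ftt]⟩

end DiscOperator

theorem stmt17_general {ε r0 : ℝ} (hε1 : ε < 1) (hr0 : r0 ∈ Ioo 0 ε) (hzero : phi22 ε r0 = 0) :
    (∀ (lam : ℝ) (ν : ℕ) (F : ℂ → ℝ) (v v' : ℝ → ℝ),
      IsDiscSol ε lam F →
      (∀ r ∈ Ioc (0 : ℝ) 1, ∀ θ : ℝ, F (pol r θ) = v r * cos (ν * θ)) →
      (∀ r ∈ Ioc (0 : ℝ) 1, HasDerivAt v (v' r) r) →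
      (∃ z ∈ Metric.closedBall (0 : ℂ) 1, F z ≠ 0) →
      lam = ((∫ r in (0 : ℝ)..(1 - r0), pd ε r0 r * v' r ^ 2) -
              (ν : ℝ) ^ 2 * ∫ r in (0 : ℝ)..(1 - r0), qd ε r0 r * v r ^ 2) /
            (∫ r in (0 : ℝ)..(1 - r0), wd ε r0 r * v r ^ 2) ∧
        0 ≤ lam) ∧
    (∀ k : ℝ, IsDiscSol ε 0 fun _ ↦ k) ∧
    (∀ F : ℂ → ℝ, IsDiscSol ε 0 F →
      ∀ z₁ ∈ Metric.closedBall (0 : ℂ) 1, ∀ z₂ ∈ Metric.closedBall (0 : ℂ) 1, F z₁ = F z₂) ∧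
    (∀ (lam₁ lam₂ : ℝ) (F₁ F₂ : ℂ → ℝ), lam₁ ≠ lam₂ → IsDiscSol ε lam₁ F₁ → IsDiscSol ε lam₂ F₂ →
      ∫ r in (0 : ℝ)..(1 - r0), ∫ θ in (0 : ℝ)..(2 * π),
        wd ε r0 r * F₁ (pol r θ) * F₂ (pol r θ) = 0) := by
  have h := mixedTypeCoeffs_phi hε1 hr0 hzero
  have hp := isIntegratingFactor_pd hε1 hr0 hzero
  refine ⟨fun lam ν F v v' hF hFv hv hne ↦
      hF.isPolarSol.eigenvalue_eq_rayleigh_and_nonneg h hp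
        (fun r hr ↦ hFv r (Ioo_subset_Ioc_self hr)) (fun r hr ↦ hv r (Ioo_subset_Ioc_self hr)) hne,
    isDiscSol_const ε, fun F hF z₁ hz₁ z₂ hz₂ ↦ ?_, fun lam₁ lam₂ F₁ F₂ hlam hF₁ hF₂ ↦ ?_⟩
  · have hconst := hF.isPolarSol.eq_apply_zero h hp
    rw [hconst z₁ hz₁, hconst z₂ hz₂]
  · simp only [mul_assoc, intervalIntegral.integral_const_mul]
    exact hF₁.isPolarSol.integral_slWeight_mul_eq_zero hF₂.isPolarSol hlam h hp

theorem stmt17 :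
    ∃ ε₀ > (0:ℝ), ∀ ε : ℝ, 0 < ε → ε ≤ ε₀ →
      ∀ r0 ∈ Ioo (0:ℝ) ε, phi22 ε r0 = 0 →
      (∀ (lam : ℝ) (ν : ℕ) (F : ℂ → ℝ) (v v' : ℝ → ℝ),
        IsDiscSol ε lam F →
        (∀ r ∈ Ioc (0:ℝ) 1, ∀ θ : ℝ, F (pol r θ) = v r * Real.cos (ν*θ)) →
        (∀ r ∈ Ioc (0:ℝ) 1, HasDerivAt v (v' r) r) →
        (∃ z ∈ Metric.closedBall (0:ℂ) 1, F z ≠ 0) →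
        lam = ((∫ r in (0:ℝ)..(1 - r0), pd ε r0 r * (v' r)^2) -
                (ν:ℝ)^2 * ∫ r in (0:ℝ)..(1 - r0), qd ε r0 r * (v r)^2) /
              (∫ r in (0:ℝ)..(1 - r0), wd ε r0 r * (v r)^2) ∧
          0 ≤ lam) ∧
      (∀ c : ℝ, IsDiscSol ε 0 (fun _ => c)) ∧
      (∀ F : ℂ → ℝ, IsDiscSol ε 0 F →
        ∀ z₁ ∈ Metric.closedBall (0:ℂ) 1, ∀ z₂ ∈ Metric.closedBall (0:ℂ) 1,
          F z₁ = F z₂) ∧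
      (∀ (lam₁ lam₂ : ℝ) (F₁ F₂ : ℂ → ℝ),
        lam₁ ≠ lam₂ →
        IsDiscSol ε lam₁ F₁ → (∃ z ∈ Metric.closedBall (0:ℂ) 1, F₁ z ≠ 0) →
        IsDiscSol ε lam₂ F₂ → (∃ z ∈ Metric.closedBall (0:ℂ) 1, F₂ z ≠ 0) →
        (∫ r in (0:ℝ)..(1 - r0), ∫ θ in (0:ℝ)..(2*π),
          wd ε r0 r * F₁ (pol r θ) * F₂ (pol r θ)) = 0) := by
  refine ⟨1 / 2, by norm_num, fun ε _ hε r0 hr0 hzero ↦ ?_⟩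
  obtain ⟨hrayleigh, hconst, hkernel, horth⟩ := stmt17_general (by linarith) hr0 hzero
  exact ⟨hrayleigh, hconst, hkernel, fun lam₁ lam₂ F₁ F₂ hlam hF₁ _ hF₂ _ ↦
    horth lam₁ lam₂ F₁ F₂ hlam hF₁ hF₂⟩
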